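/- Let A and B be differential graded Poisson algebras over a field k, and equip A⊗B with the tensor product differential graded Poisson algebra structure. Then (A⊗B)^e ≅ A^e ⊗ B^e as differential graded algebras; the isomorphism is realized by the DGA map m = m^A⊗m^B : A⊗B → A^e⊗B^e and the DG Lie algebra map h = m^A⊗h^B + h^A⊗m^B : A⊗B → A^e⊗B^e, which exhibit A^e⊗B^e as a universal enveloping algebra of A⊗B. -/

import Mathlib

open scoped TensorProduct

noncomputable section

namespace DGPaper

universe u

/-- A differential graded Lie algebra structure on a `k`-vector space `V`. -/
structure DGLAOn (k : Type u) [Field k] (V : Type u) [AddCommGroup V] [Module k V] where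
  gr : ℤ → Submodule k V
  decomp : DirectSum.Decomposition gr
  br : V →ₗ[k] V →ₗ[k] V
  br_mem : ∀ {i j : ℤ} {a b : V}, a ∈ gr i → b ∈ gr j → br a b ∈ gr (i + j)
  br_antisymm : ∀ {i j : ℤ} {a b : V}, a ∈ gr i → b ∈ gr j →
    br a b = -(((-1 : k) ^ (i * j)) • br b a)
  br_jacobi : ∀ {i j l : ℤ} {a b c : V}, a ∈ gr i → b ∈ gr j → c ∈ gr l →
    br a (br b c) = br (br a b) c + ((-1 : k) ^ (i * j)) • br b (br a c)
  d : V →ₗ[k] V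
  d_mem : ∀ {i : ℤ} {a : V}, a ∈ gr i → d a ∈ gr (i + 1)
  d_sq : ∀ a : V, d (d a) = 0
  d_br : ∀ {i j : ℤ} {a b : V}, a ∈ gr i → b ∈ gr j →
    d (br a b) = br (d a) b + ((-1 : k) ^ i) • br a (d b)

/-- A differential graded (associative, unital) algebra structure on a `k`-vector space `N`. -/
structure DGAOn (k : Type u) [Field k] (N : Type u) [AddCommGroup N] [Module k N] where
  gr : ℤ → Submodule k N
  decomp : DirectSum.Decomposition gr
  mul : N →ₗ[k] N →ₗ[k] N
  one : N
  one_mem : one ∈ gr 0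
  mul_mem : ∀ {i j : ℤ} {a b : N}, a ∈ gr i → b ∈ gr j → mul a b ∈ gr (i + j)
  mul_assoc : ∀ a b c : N, mul (mul a b) c = mul a (mul b c)
  one_mul : ∀ a : N, mul one a = a
  mul_one : ∀ a : N, mul a one = a
  d : N →ₗ[k] N
  d_mem : ∀ {i : ℤ} {a : N}, a ∈ gr i → d a ∈ gr (i + 1)
  d_sq : ∀ a : N, d (d a) = 0
  d_mul : ∀ {i j : ℤ} {a b : N}, a ∈ gr i → b ∈ gr j →
    d (mul a b) = mul (d a) b + ((-1 : k) ^ i) • mul a (d b)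

/-- A differential graded Poisson algebra structure on a `k`-vector space `M`. -/
structure DGPAOn (k : Type u) [Field k] (M : Type u) [AddCommGroup M] [Module k M] where
  gr : ℤ → Submodule k M
  decomp : DirectSum.Decomposition gr
  mul : M →ₗ[k] M →ₗ[k] M
  one : M
  one_mem : one ∈ gr 0
  mul_mem : ∀ {i j : ℤ} {a b : M}, a ∈ gr i → b ∈ gr j → mul a b ∈ gr (i + j)
  mul_assoc : ∀ a b c : M, mul (mul a b) c = mul a (mul b c)
  one_mul : ∀ a : M, mul one a = a
  mul_one : ∀ a : M, mul a one = a
  mul_comm : ∀ {i j : ℤ} {a b : M}, a ∈ gr i → b ∈ gr j →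
    mul a b = ((-1 : k) ^ (i * j)) • mul b a
  br : M →ₗ[k] M →ₗ[k] M
  br_mem : ∀ {i j : ℤ} {a b : M}, a ∈ gr i → b ∈ gr j → br a b ∈ gr (i + j)
  br_antisymm : ∀ {i j : ℤ} {a b : M}, a ∈ gr i → b ∈ gr j →
    br a b = -(((-1 : k) ^ (i * j)) • br b a)
  br_jacobi : ∀ {i j l : ℤ} {a b c : M}, a ∈ gr i → b ∈ gr j → c ∈ gr l →
    br a (br b c) = br (br a b) c + ((-1 : k) ^ (i * j)) • br b (br a c)
  br_deriv : ∀ {i j l : ℤ} {a b c : M}, a ∈ gr i → b ∈ gr j → c ∈ gr l →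
    br a (mul b c) = mul (br a b) c + ((-1 : k) ^ (i * j)) • mul b (br a c)
  d : M →ₗ[k] M
  d_mem : ∀ {i : ℤ} {a : M}, a ∈ gr i → d a ∈ gr (i + 1)
  d_sq : ∀ a : M, d (d a) = 0
  d_br : ∀ {i j : ℤ} {a b : M}, a ∈ gr i → b ∈ gr j →
    d (br a b) = br (d a) b + ((-1 : k) ^ i) • br a (d b)
  d_mul : ∀ {i j : ℤ} {a b : M}, a ∈ gr i → b ∈ gr j →
    d (mul a b) = mul (d a) b + ((-1 : k) ^ i) • mul a (d b)

section Defs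

variable {k : Type u} [Field k]

/-- The differential graded Lie algebra underlying a differential graded Poisson algebra. -/
def DGPAOn.toLie {M : Type u} [AddCommGroup M] [Module k M] (P : DGPAOn k M) :
    DGLAOn k M where
  gr := P.gr
  decomp := P.decomp
  br := P.br
  br_mem := P.br_mem
  br_antisymm := P.br_antisymm
  br_jacobi := P.br_jacobi
  d := P.d
  d_mem := P.d_mem
  d_sq := P.d_sq
  d_br := P.d_br

section Maps

variable {M N : Type u} [AddCommGroup M] [Module k M] [AddCommGroup N] [Module k N]

/-- A morphism of differential graded algebras (degree-0, multiplicative, unital,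
commuting with the differentials). -/
def IsDGAHom (E : DGAOn k M) (F : DGAOn k N) (f : M →ₗ[k] N) : Prop :=
  (∀ {n : ℤ} {x : M}, x ∈ E.gr n → f x ∈ F.gr n) ∧
  (∀ x y : M, f (E.mul x y) = F.mul (f x) (f y)) ∧
  f E.one = F.one ∧
  ∀ x : M, f (E.d x) = F.d (f x)

/-- A morphism of differential graded Poisson algebras. -/
def IsDGPAHom (P : DGPAOn k M) (Q : DGPAOn k N) (f : M →ₗ[k] N) : Prop :=
  (∀ {n : ℤ} {x : M}, x ∈ P.gr n → f x ∈ Q.gr n) ∧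
  (∀ x y : M, f (P.mul x y) = Q.mul (f x) (f y)) ∧
  f P.one = Q.one ∧
  (∀ x : M, f (P.d x) = Q.d (f x)) ∧
  ∀ x y : M, f (P.br x y) = Q.br (f x) (f y)

end Maps

section Tensor

variable {A B : Type u} [AddCommGroup A] [Module k A] [AddCommGroup B] [Module k B]

/-- `R` is the tensor product differential graded Poisson algebra structure on `A ⊗[k] B`
induced by `P` and `Q`. -/
def IsTensorDGPA (P : DGPAOn k A) (Q : DGPAOn k B) (R : DGPAOn k (A ⊗[k] B)) : Prop :=
  (∀ n : ℤ, R.gr n = Submodule.span k {z : A ⊗[k] B |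
      ∃ (i j : ℤ) (a : A) (b : B), i + j = n ∧ a ∈ P.gr i ∧ b ∈ Q.gr j ∧ z = a ⊗ₜ[k] b}) ∧
  R.one = P.one ⊗ₜ[k] Q.one ∧
  (∀ {i j i' j' : ℤ} {a a' : A} {b b' : B},
      a ∈ P.gr i → b ∈ Q.gr j → a' ∈ P.gr i' → b' ∈ Q.gr j' →
    R.mul (a ⊗ₜ[k] b) (a' ⊗ₜ[k] b') = ((-1 : k) ^ (i' * j)) • (P.mul a a' ⊗ₜ[k] Q.mul b b')) ∧
  (∀ {i j : ℤ} {a : A} {b : B}, a ∈ P.gr i → b ∈ Q.gr j →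
    R.d (a ⊗ₜ[k] b) = P.d a ⊗ₜ[k] b + ((-1 : k) ^ i) • (a ⊗ₜ[k] Q.d b)) ∧
  (∀ {i j i' j' : ℤ} {a a' : A} {b b' : B},
      a ∈ P.gr i → b ∈ Q.gr j → a' ∈ P.gr i' → b' ∈ Q.gr j' →
    R.br (a ⊗ₜ[k] b) (a' ⊗ₜ[k] b') =
      ((-1 : k) ^ (i' * j)) • (P.br a a' ⊗ₜ[k] Q.mul b b' + P.mul a a' ⊗ₜ[k] Q.br b b'))

/-- `G` is the tensor product differential graded algebra structure on `A ⊗[k] B`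
induced by `E` and `F` (with the Koszul sign rule). -/
def IsTensorDGA (E : DGAOn k A) (F : DGAOn k B) (G : DGAOn k (A ⊗[k] B)) : Prop :=
  (∀ n : ℤ, G.gr n = Submodule.span k {z : A ⊗[k] B |
      ∃ (i j : ℤ) (x : A) (y : B), i + j = n ∧ x ∈ E.gr i ∧ y ∈ F.gr j ∧ z = x ⊗ₜ[k] y}) ∧
  G.one = E.one ⊗ₜ[k] F.one ∧
  (∀ {i j i' j' : ℤ} {x x' : A} {y y' : B},
      x ∈ E.gr i → y ∈ F.gr j → x' ∈ E.gr i' → y' ∈ F.gr j' →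
    G.mul (x ⊗ₜ[k] y) (x' ⊗ₜ[k] y') = ((-1 : k) ^ (i' * j)) • (E.mul x x' ⊗ₜ[k] F.mul y y')) ∧
  (∀ {i j : ℤ} {x : A} {y : B}, x ∈ E.gr i → y ∈ F.gr j →
    G.d (x ⊗ₜ[k] y) = E.d x ⊗ₜ[k] y + ((-1 : k) ^ i) • (x ⊗ₜ[k] F.d y))

end Tensor

section Env

variable {M : Type u} [AddCommGroup M] [Module k M]

/-- The defining relations of the universal enveloping algebra `A^e` of a differential
graded Poisson algebra, imposed on the tensor algebra of `M × M`; the first copy of `M`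
gives the generators `m_a`, the second copy the generators `h_a`. -/
inductive EnvRel (P : DGPAOn k M) :
    TensorAlgebra k (M × M) → TensorAlgebra k (M × M) → Prop
  | relone : EnvRel P (TensorAlgebra.ι k ((P.one, 0) : M × M)) 1
  | relmul (a b : M) :
      EnvRel P (TensorAlgebra.ι k ((P.mul a b, 0) : M × M))
        (TensorAlgebra.ι k ((a, 0) : M × M) * TensorAlgebra.ι k ((b, 0) : M × M))
  | relhmul {i j : ℤ} {a b : M} (ha : a ∈ P.gr i) (hb : b ∈ P.gr j) :
      EnvRel P (TensorAlgebra.ι k ((0, P.mul a b) : M × M))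
        (TensorAlgebra.ι k ((a, 0) : M × M) * TensorAlgebra.ι k ((0, b) : M × M) +
          ((-1 : k) ^ (i * j)) •
            (TensorAlgebra.ι k ((b, 0) : M × M) * TensorAlgebra.ι k ((0, a) : M × M)))
  | relmbr {i j : ℤ} {a b : M} (ha : a ∈ P.gr i) (hb : b ∈ P.gr j) :
      EnvRel P (TensorAlgebra.ι k ((P.br a b, 0) : M × M))
        (TensorAlgebra.ι k ((0, a) : M × M) * TensorAlgebra.ι k ((b, 0) : M × M) -
          ((-1 : k) ^ (i * j)) •
            (TensorAlgebra.ι k ((b, 0) : M × M) * TensorAlgebra.ι k ((0, a) : M × M)))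
  | relhbr {i j : ℤ} {a b : M} (ha : a ∈ P.gr i) (hb : b ∈ P.gr j) :
      EnvRel P (TensorAlgebra.ι k ((0, P.br a b) : M × M))
        (TensorAlgebra.ι k ((0, a) : M × M) * TensorAlgebra.ι k ((0, b) : M × M) -
          ((-1 : k) ^ (i * j)) •
            (TensorAlgebra.ι k ((0, b) : M × M) * TensorAlgebra.ι k ((0, a) : M × M)))

/-- The universal enveloping algebra `A^e` of a differential graded Poisson algebra,
as a quotient of the tensor algebra on two copies of `A`. -/
abbrev Env (P : DGPAOn k M) : Type u := RingQuot (EnvRel P)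

/-- The generators `m_a` of `A^e`. -/
def mgen (P : DGPAOn k M) : M →ₗ[k] Env P :=
  (RingQuot.mkAlgHom k (EnvRel P)).toLinearMap ∘ₗ
    ((TensorAlgebra.ι k : (M × M) →ₗ[k] TensorAlgebra k (M × M)) ∘ₗ LinearMap.inl k M M)

/-- The generators `h_a` of `A^e`. -/
def hgen (P : DGPAOn k M) : M →ₗ[k] Env P :=
  (RingQuot.mkAlgHom k (EnvRel P)).toLinearMap ∘ₗ
    ((TensorAlgebra.ι k : (M × M) →ₗ[k] TensorAlgebra k (M × M)) ∘ₗ LinearMap.inr k M M)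

/-- `E` is the differential graded algebra structure on `A^e`, with the ring
multiplication of `A^e`, grading `|m_a| = |h_a| = |a|` and differential determined by
`∂(m_a) = m_{d a}`, `∂(h_a) = h_{d a}` and the graded Leibniz rule. -/
def IsEnvDGA (P : DGPAOn k M) (E : DGAOn k (Env P)) : Prop :=
  (∀ x y : Env P, E.mul x y = x * y) ∧
  E.one = 1 ∧
  (∀ {i : ℤ} {a : M}, a ∈ P.gr i → mgen P a ∈ E.gr i) ∧
  (∀ {i : ℤ} {a : M}, a ∈ P.gr i → hgen P a ∈ E.gr i) ∧
  (∀ a : M, E.d (mgen P a) = mgen P (P.d a)) ∧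
  (∀ a : M, E.d (hgen P a) = hgen P (P.d a))

end Env

section Lie

variable {V : Type u} [AddCommGroup V] [Module k V]

/-- The defining relations of the universal enveloping algebra of a differential graded
Lie algebra. -/
inductive LieRel (L : DGLAOn k V) : TensorAlgebra k V → TensorAlgebra k V → Prop
  | rel {i j : ℤ} {a b : V} (ha : a ∈ L.gr i) (hb : b ∈ L.gr j) :
      LieRel L
        (TensorAlgebra.ι k a * TensorAlgebra.ι k b -
          ((-1 : k) ^ (i * j)) • (TensorAlgebra.ι k b * TensorAlgebra.ι k a))
        (TensorAlgebra.ι k (L.br a b))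

/-- The universal enveloping algebra `U(L)` of a differential graded Lie algebra `L`. -/
abbrev ULie (L : DGLAOn k V) : Type u := RingQuot (LieRel L)

/-- The canonical map `L → U(L)`. -/
def uGen (L : DGLAOn k V) : V →ₗ[k] ULie L :=
  (RingQuot.mkAlgHom k (LieRel L)).toLinearMap ∘ₗ TensorAlgebra.ι k

/-- `E` is the differential graded algebra structure of `U(L)`. -/
def IsULieDGA (L : DGLAOn k V) (E : DGAOn k (ULie L)) : Prop :=
  (∀ x y : ULie L, E.mul x y = x * y) ∧
  E.one = 1 ∧
  (∀ {i : ℤ} {a : V}, a ∈ L.gr i → uGen L a ∈ E.gr i) ∧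
  (∀ a : V, E.d (uGen L a) = uGen L (L.d a))

/-- The graded-symmetry relations defining the graded symmetric algebra of `L`. -/
inductive SymRel (L : DGLAOn k V) : TensorAlgebra k V → TensorAlgebra k V → Prop
  | rel {i j : ℤ} {a b : V} (ha : a ∈ L.gr i) (hb : b ∈ L.gr j) :
      SymRel L (TensorAlgebra.ι k a * TensorAlgebra.ι k b)
        (((-1 : k) ^ (i * j)) • (TensorAlgebra.ι k b * TensorAlgebra.ι k a))

/-- The graded symmetric algebra `𝕊L` of a differential graded Lie algebra `L`. -/
abbrev SymAlg (L : DGLAOn k V) : Type u := RingQuot (SymRel L)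

/-- The canonical map `L → 𝕊L`. -/
def sGen (L : DGLAOn k V) : V →ₗ[k] SymAlg L :=
  (RingQuot.mkAlgHom k (SymRel L)).toLinearMap ∘ₗ TensorAlgebra.ι k

/-- `R` is the differential graded Poisson algebra structure on `𝕊L` with differential
extending `d` and bracket extending the Lie bracket of `L` as a graded biderivation. -/
def IsSymDGPA (L : DGLAOn k V) (R : DGPAOn k (SymAlg L)) : Prop :=
  (∀ x y : SymAlg L, R.mul x y = x * y) ∧
  R.one = 1 ∧
  (∀ {i : ℤ} {a : V}, a ∈ L.gr i → sGen L a ∈ R.gr i) ∧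
  (∀ a : V, R.d (sGen L a) = sGen L (L.d a)) ∧
  (∀ a b : V, R.br (sGen L a) (sGen L b) = sGen L (L.br a b))

/-- `S` is the graded semidirect product differential graded Lie algebra `L ⋊ L`. -/
def IsSemidirect (L : DGLAOn k V) (S : DGLAOn k (V × V)) : Prop :=
  (∀ n : ℤ, S.gr n = (L.gr n).prod (L.gr n)) ∧
  (∀ z : V × V, S.d z = (L.d z.1, L.d z.2)) ∧
  (∀ {i j : ℤ} {x₁ x₂ y₁ y₂ : V}, x₁ ∈ L.gr i → x₂ ∈ L.gr i → y₁ ∈ L.gr j → y₂ ∈ L.gr j →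
    S.br (x₁, x₂) (y₁, y₂) =
      (L.br x₂ y₁ - ((-1 : k) ^ (i * j)) • L.br y₂ x₁, L.br x₂ y₂))

end Lie

section Smash

variable {M : Type u} [AddCommGroup M] [Module k M]

/-- The generators `1#(ab) - a#b - (-1)^{|a||b|} b#a` of the ideal defining `A^E`
inside the smash product `A # U(A)`. -/
def smashGens (P : DGPAOn k M) : Set (M ⊗[k] ULie P.toLie) :=
  {z | ∃ (i j : ℤ) (a b : M), a ∈ P.gr i ∧ b ∈ P.gr j ∧
    z = P.one ⊗ₜ[k] uGen P.toLie (P.mul a b) - a ⊗ₜ[k] uGen P.toLie b -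
        ((-1 : k) ^ (i * j)) • (b ⊗ₜ[k] uGen P.toLie a)}

/-- The two-sided ideal generated by a set `T` in a differential graded algebra `S`. -/
def idealGen {N : Type u} [AddCommGroup N] [Module k N] (S : DGAOn k N) (T : Set N) :
    Submodule k N :=
  sInf {I : Submodule k N | T ⊆ I ∧ ∀ x ∈ I, ∀ y : N, S.mul x y ∈ I ∧ S.mul y x ∈ I}

/-- `S` is the smash product differential graded algebra `A # U(A)`. -/
def IsSmash (P : DGPAOn k M) (EU : DGAOn k (ULie P.toLie))
    (S : DGAOn k (M ⊗[k] ULie P.toLie)) : Prop :=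
  S.one = P.one ⊗ₜ[k] (1 : ULie P.toLie) ∧
  (∀ a b : M, S.mul (a ⊗ₜ[k] (1 : ULie P.toLie)) (b ⊗ₜ[k] (1 : ULie P.toLie)) =
      P.mul a b ⊗ₜ[k] (1 : ULie P.toLie)) ∧
  (∀ u v : ULie P.toLie, S.mul (P.one ⊗ₜ[k] u) (P.one ⊗ₜ[k] v) = P.one ⊗ₜ[k] (u * v)) ∧
  (∀ (a : M) (u : ULie P.toLie), S.mul (a ⊗ₜ[k] (1 : ULie P.toLie)) (P.one ⊗ₜ[k] u) =
      a ⊗ₜ[k] u) ∧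
  (∀ {i j : ℤ} {c b : M}, c ∈ P.gr i → b ∈ P.gr j →
    S.mul (P.one ⊗ₜ[k] uGen P.toLie c) (b ⊗ₜ[k] (1 : ULie P.toLie)) =
      P.br c b ⊗ₜ[k] (1 : ULie P.toLie) + ((-1 : k) ^ (i * j)) • (b ⊗ₜ[k] uGen P.toLie c)) ∧
  (∀ {i j : ℤ} {a : M} {u : ULie P.toLie}, a ∈ P.gr i → u ∈ EU.gr j →
      a ⊗ₜ[k] u ∈ S.gr (i + j)) ∧
  (∀ {i : ℤ} {a : M}, a ∈ P.gr i → ∀ u : ULie P.toLie,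
    S.d (a ⊗ₜ[k] u) = P.d a ⊗ₜ[k] u + ((-1 : k) ^ i) • (a ⊗ₜ[k] EU.d u))

/-- `R` is the quotient differential graded algebra structure of `S` by the ideal `I`. -/
def IsQuotDGA {N : Type u} [AddCommGroup N] [Module k N] (S : DGAOn k N)
    (I : Submodule k N) (R : DGAOn k (N ⧸ I)) : Prop :=
  (∀ n : ℤ, R.gr n = Submodule.map I.mkQ (S.gr n)) ∧
  R.one = I.mkQ S.one ∧
  (∀ x y : N, R.mul (I.mkQ x) (I.mkQ y) = I.mkQ (S.mul x y)) ∧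
  (∀ x : N, R.d (I.mkQ x) = I.mkQ (S.d x))

end Smash

section Op

variable {M N : Type u} [AddCommGroup M] [Module k M] [AddCommGroup N] [Module k N]

/-- `P'` is the opposite differential graded Poisson algebra of `P` (the product is
unchanged by graded commutativity, the bracket is negated). -/
def IsOpDGPA (P P' : DGPAOn k M) : Prop :=
  P'.gr = P.gr ∧ (∀ x y : M, P'.mul x y = P.mul x y) ∧ P'.one = P.one ∧ P'.d = P.d ∧
  (∀ x y : M, P'.br x y = - P.br x y)

/-- `E'` is the opposite differential graded algebra of `E` (with the Koszul sign). -/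
def IsOpDGA (E E' : DGAOn k N) : Prop :=
  E'.gr = E.gr ∧ E'.one = E.one ∧ E'.d = E.d ∧
  (∀ {i j : ℤ} {x y : N}, x ∈ E.gr i → y ∈ E.gr j →
    E'.mul x y = ((-1 : k) ^ (i * j)) • E.mul y x)

end Op

section UEnv

variable {M N : Type u} [AddCommGroup M] [Module k M] [AddCommGroup N] [Module k N]

/-- A pair `(f, g)` where `f : A → D` is a differential graded algebra map and
`g : A → D_L` is a differential graded Lie algebra map (into the graded commutator Lie
structure of `D`), satisfying the two compatibility conditions of the universal property
of the universal enveloping algebra of a differential graded Poisson algebra. -/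
def UEPair (P : DGPAOn k M) (D : DGAOn k N) (f g : M →ₗ[k] N) : Prop :=
  (∀ {n : ℤ} {x : M}, x ∈ P.gr n → f x ∈ D.gr n) ∧
  (∀ {n : ℤ} {x : M}, x ∈ P.gr n → g x ∈ D.gr n) ∧
  (∀ a b : M, f (P.mul a b) = D.mul (f a) (f b)) ∧
  f P.one = D.one ∧
  (∀ a : M, f (P.d a) = D.d (f a)) ∧
  (∀ a : M, g (P.d a) = D.d (g a)) ∧
  (∀ {i j : ℤ} {a b : M}, a ∈ P.gr i → b ∈ P.gr j →
    g (P.br a b) = D.mul (g a) (g b) - ((-1 : k) ^ (i * j)) • D.mul (g b) (g a)) ∧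
  (∀ {i j : ℤ} {a b : M}, a ∈ P.gr i → b ∈ P.gr j →
    f (P.br a b) = D.mul (g a) (f b) - ((-1 : k) ^ (i * j)) • D.mul (f b) (g a)) ∧
  (∀ {i j : ℤ} {a b : M}, a ∈ P.gr i → b ∈ P.gr j →
    g (P.mul a b) = D.mul (f a) (g b) + ((-1 : k) ^ (i * j)) • D.mul (f b) (g a))

/-- `(E, α, β)` is a universal enveloping algebra of the differential graded Poisson
algebra `P`. -/
def IsUEnv (P : DGPAOn k M) (E : DGAOn k N) (α β : M →ₗ[k] N) : Prop :=
  UEPair P E α β ∧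
  ∀ (D' : Type u) [AddCommGroup D'] [Module k D'] (D : DGAOn k D') (f g : M →ₗ[k] D'),
    UEPair P D f g →
    ∃! φ : N →ₗ[k] D',
      IsDGAHom E D φ ∧ (∀ a : M, φ (α a) = f a) ∧ (∀ a : M, φ (β a) = g a)

end UEnv

section IdealsQuotients

variable {M : Type u} [AddCommGroup M] [Module k M]

/-- `B` is a differential graded Poisson ideal of `P`. -/
def IsDGPIdeal (P : DGPAOn k M) (B : Submodule k M) : Prop :=
  (B = ⨆ n : ℤ, B ⊓ P.gr n) ∧
  (∀ x ∈ B, P.d x ∈ B) ∧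
  (∀ x ∈ B, ∀ a : M, P.mul x a ∈ B) ∧
  (∀ x ∈ B, ∀ a : M, P.mul a x ∈ B) ∧
  (∀ x ∈ B, ∀ a : M, P.br a x ∈ B)

/-- `B` is a differential graded Poisson subalgebra of `P`. -/
def IsDGPSubalg (P : DGPAOn k M) (B : Submodule k M) : Prop :=
  (B = ⨆ n : ℤ, B ⊓ P.gr n) ∧ P.one ∈ B ∧
  (∀ x ∈ B, ∀ y ∈ B, P.mul x y ∈ B) ∧
  (∀ x ∈ B, P.d x ∈ B) ∧
  (∀ x ∈ B, ∀ y ∈ B, P.br x y ∈ B)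

/-- `R` is the quotient differential graded Poisson algebra structure on `M ⧸ B`. -/
def IsQuotDGPA (P : DGPAOn k M) (B : Submodule k M) (R : DGPAOn k (M ⧸ B)) : Prop :=
  (∀ n : ℤ, R.gr n = Submodule.map B.mkQ (P.gr n)) ∧
  R.one = B.mkQ P.one ∧
  (∀ x y : M, R.mul (B.mkQ x) (B.mkQ y) = B.mkQ (P.mul x y)) ∧
  (∀ x : M, R.d (B.mkQ x) = B.mkQ (P.d x)) ∧
  (∀ x y : M, R.br (B.mkQ x) (B.mkQ y) = B.mkQ (P.br x y))

/-- `S` is the differential graded Poisson algebra structure induced on a differential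
graded Poisson subalgebra `B` of `P`. -/
def IsSubDGPA (P : DGPAOn k M) (B : Submodule k M) (S : DGPAOn k B) : Prop :=
  (∀ n : ℤ, S.gr n = Submodule.comap B.subtype (P.gr n)) ∧
  ((S.one : M) = P.one) ∧
  (∀ x y : B, (S.mul x y : M) = P.mul (x : M) (y : M)) ∧
  (∀ x : B, (S.d x : M) = P.d (x : M)) ∧
  (∀ x y : B, (S.br x y : M) = P.br (x : M) (y : M))

/-- The cocycles `ker d` of a differential graded Poisson algebra. -/
def Cocycles (P : DGPAOn k M) : Submodule k M := LinearMap.ker P.d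

/-- The coboundaries `im d`, viewed inside the cocycles. -/
def CobIn (P : DGPAOn k M) : Submodule k (Cocycles P) :=
  Submodule.comap (Cocycles P).subtype (LinearMap.range P.d)

/-- The cohomology `H(A) = ker d / im d` of a differential graded Poisson algebra. -/
abbrev Cohom (P : DGPAOn k M) : Type u := Cocycles P ⧸ CobIn P

/-- The class map `ker d → H(A)`. -/
def cohCls (P : DGPAOn k M) : Cocycles P →ₗ[k] Cohom P := (CobIn P).mkQ

/-- `R` is the graded Poisson algebra structure on the cohomology of `P` (a differential
graded Poisson algebra structure with zero differential, with the induced grading,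
product and bracket). -/
def IsCohomDGPA (P : DGPAOn k M) (R : DGPAOn k (Cohom P)) : Prop :=
  R.d = 0 ∧
  (∀ n : ℤ, R.gr n =
    Submodule.map (cohCls P) (Submodule.comap (Cocycles P).subtype (P.gr n))) ∧
  (∀ h : P.one ∈ Cocycles P, R.one = cohCls P ⟨P.one, h⟩) ∧
  (∀ (a b : Cocycles P) (h : P.mul (a : M) (b : M) ∈ Cocycles P),
    R.mul (cohCls P a) (cohCls P b) = cohCls P ⟨P.mul (a : M) (b : M), h⟩) ∧
  (∀ (a b : Cocycles P) (h : P.br (a : M) (b : M) ∈ Cocycles P),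
    R.br (cohCls P a) (cohCls P b) = cohCls P ⟨P.br (a : M) (b : M), h⟩)

end IdealsQuotients

end Defs

section ModuleDefs

variable {k : Type u} [Field k]

/-- A left differential graded module structure on `X` over the differential graded
algebra `E`. -/
structure DGModOn {N : Type u} [AddCommGroup N] [Module k N] (E : DGAOn k N)
    (X : Type u) [AddCommGroup X] [Module k X] where
  grm : ℤ → Submodule k X
  decomp : DirectSum.Decomposition grm
  act : N →ₗ[k] X →ₗ[k] X
  act_one : ∀ x : X, act E.one x = x
  act_mul : ∀ (r s : N) (x : X), act (E.mul r s) x = act r (act s x)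
  act_mem : ∀ {i j : ℤ} {r : N} {x : X}, r ∈ E.gr i → x ∈ grm j → act r x ∈ grm (i + j)
  dm : X →ₗ[k] X
  dm_mem : ∀ {i : ℤ} {x : X}, x ∈ grm i → dm x ∈ grm (i + 1)
  dm_sq : ∀ x : X, dm (dm x) = 0
  dm_act : ∀ {i : ℤ} {r : N}, r ∈ E.gr i → ∀ x : X,
    dm (act r x) = act (E.d r) x + ((-1 : k) ^ i) • act r (dm x)

/-- A left differential graded Poisson module structure on `X` over the differential
graded Poisson algebra `P`. -/
structure DGPModOn {M : Type u} [AddCommGroup M] [Module k M] (P : DGPAOn k M)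
    (X : Type u) [AddCommGroup X] [Module k X] where
  grm : ℤ → Submodule k X
  decomp : DirectSum.Decomposition grm
  act : M →ₗ[k] X →ₗ[k] X
  act_one : ∀ x : X, act P.one x = x
  act_mul : ∀ (a b : M) (x : X), act (P.mul a b) x = act a (act b x)
  act_mem : ∀ {i j : ℤ} {a : M} {x : X}, a ∈ P.gr i → x ∈ grm j → act a x ∈ grm (i + j)
  dm : X →ₗ[k] X
  dm_mem : ∀ {i : ℤ} {x : X}, x ∈ grm i → dm x ∈ grm (i + 1)
  dm_sq : ∀ x : X, dm (dm x) = 0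
  dm_act : ∀ {i : ℤ} {a : M}, a ∈ P.gr i → ∀ x : X,
    dm (act a x) = act (P.d a) x + ((-1 : k) ^ i) • act a (dm x)
  bact : M →ₗ[k] X →ₗ[k] X
  bact_mem : ∀ {i j : ℤ} {a : M} {x : X}, a ∈ P.gr i → x ∈ grm j → bact a x ∈ grm (i + j)
  bact_amod : ∀ {i j : ℤ} {a b : M}, a ∈ P.gr i → b ∈ P.gr j → ∀ x : X,
    bact a (act b x) = act (P.br a b) x + ((-1 : k) ^ (i * j)) • act b (bact a x)
  bact_mulact : ∀ {i j : ℤ} {a b : M}, a ∈ P.gr i → b ∈ P.gr j → ∀ x : X,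
    bact (P.mul a b) x = act a (bact b x) + ((-1 : k) ^ (i * j)) • act b (bact a x)
  bact_jacobi : ∀ {i j : ℤ} {a b : M}, a ∈ P.gr i → b ∈ P.gr j → ∀ x : X,
    bact a (bact b x) = bact (P.br a b) x + ((-1 : k) ^ (i * j)) • bact b (bact a x)
  dm_bact : ∀ {i : ℤ} {a : M}, a ∈ P.gr i → ∀ x : X,
    dm (bact a x) = bact (P.d a) x + ((-1 : k) ^ i) • bact a (dm x)

/-- A morphism of left differential graded modules. -/
def IsDGModHom {N X Y : Type u} [AddCommGroup N] [Module k N]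
    [AddCommGroup X] [Module k X] [AddCommGroup Y] [Module k Y]
    {E : DGAOn k N} (W : DGModOn E X) (W' : DGModOn E Y) (f : X →ₗ[k] Y) : Prop :=
  (∀ {n : ℤ} {x : X}, x ∈ W.grm n → f x ∈ W'.grm n) ∧
  (∀ x : X, f (W.dm x) = W'.dm (f x)) ∧
  (∀ (r : N) (x : X), f (W.act r x) = W'.act r (f x))

/-- A morphism of left differential graded Poisson modules. -/
def IsDGPModHom {M X Y : Type u} [AddCommGroup M] [Module k M]
    [AddCommGroup X] [Module k X] [AddCommGroup Y] [Module k Y]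
    {P : DGPAOn k M} (V : DGPModOn P X) (V' : DGPModOn P Y) (f : X →ₗ[k] Y) : Prop :=
  (∀ {n : ℤ} {x : X}, x ∈ V.grm n → f x ∈ V'.grm n) ∧
  (∀ x : X, f (V.dm x) = V'.dm (f x)) ∧
  (∀ (a : M) (x : X), f (V.act a x) = V'.act a (f x)) ∧
  (∀ (a : M) (x : X), f (V.bact a x) = V'.bact a (f x))

/-- The correspondence between a differential graded Poisson module structure over `P`
and a differential graded module structure over `A^e` on the same space. -/
def ModCorr {M X : Type u} [AddCommGroup M] [Module k M] [AddCommGroup X] [Module k X]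
    {P : DGPAOn k M} {E : DGAOn k (Env P)}
    (V : DGPModOn P X) (W : DGModOn E X) : Prop :=
  W.grm = V.grm ∧ W.dm = V.dm ∧
  (∀ (a : M) (x : X), W.act (mgen P a) x = V.act a x) ∧
  (∀ (a : M) (x : X), W.act (hgen P a) x = V.bact a x)

end ModuleDefs

section Helpers

variable {k : Type u} [Field k]

theorem sgn_cases (n : ℤ) : (-1 : k) ^ n = 1 ∨ (-1 : k) ^ n = -1 := by
  rcases Int.even_or_odd n with h | h
  · exact Or.inl h.neg_one_zpow
  · exact Or.inr h.neg_one_zpow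

theorem sgn_add (i j : ℤ) : (-1 : k) ^ (i + j) = (-1 : k) ^ i * (-1 : k) ^ j :=
  zpow_add₀ (by simp) i j

section Gr

variable {M N : Type u} [AddCommGroup M] [Module k M] [AddCommGroup N] [Module k N]

theorem gr_ind {gr : ℤ → Submodule k M} (dec : DirectSum.Decomposition gr) {p : M → Prop}
    (hom : ∀ i, ∀ x ∈ gr i, p x) (add : ∀ x y, p x → p y → p (x + y)) (x : M) : p x := by
  have h := (DirectSum.Decomposition.isInternal gr).submodule_iSup_eq_top
  have hx : x ∈ ⨆ i, gr i := by rw [h]; trivial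
  induction hx using Submodule.iSup_induction' with
  | mem i x hx => exact hom i x hx
  | zero => exact hom 0 0 (Submodule.zero_mem _)
  | add x y _ _ h1 h2 => exact add x y h1 h2

theorem gr_le {gr H : ℤ → Submodule k M} (dec : DirectSum.Decomposition gr)
    (hle : ∀ n, H n ≤ gr n) (htop : ∀ x, x ∈ ⨆ n, H n) (n : ℤ) : gr n ≤ H n := by
  have key : ∀ y : M, ((DirectSum.decompose gr y) n : M) ∈ H n := by
    intro y
    have hy := htop y
    induction hy using Submodule.iSup_induction' with
    | mem i x hx =>
      by_cases h : i = n
      · subst h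
        rw [DirectSum.decompose_of_mem_same gr (hle _ hx)]
        exact hx
      · rw [DirectSum.decompose_of_mem_ne gr (hle _ hx) h]
        exact Submodule.zero_mem _
    | zero => simp
    | add x y _ _ h1 h2 =>
      rw [DirectSum.decompose_add]
      exact Submodule.add_mem _ h1 h2
  intro x hx
  have := key x
  rwa [DirectSum.decompose_of_mem_same gr hx] at this

theorem tensor_ind {g1 : ℤ → Submodule k M} (d1 : DirectSum.Decomposition g1)
    {g2 : ℤ → Submodule k N} (d2 : DirectSum.Decomposition g2) {p : M ⊗[k] N → Prop}
    (hom : ∀ i j, ∀ x ∈ g1 i, ∀ y ∈ g2 j, p (x ⊗ₜ[k] y))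
    (add : ∀ x y, p x → p y → p (x + y)) (z : M ⊗[k] N) : p z := by
  induction z using TensorProduct.induction_on with
  | zero =>
    have := hom 0 0 0 (Submodule.zero_mem _) 0 (Submodule.zero_mem _)
    simpa using this
  | add x y h1 h2 => exact add x y h1 h2
  | tmul x y =>
    refine gr_ind d1 (p := fun x => p (x ⊗ₜ[k] y)) (fun i x hx => ?_) (fun x x' h h' => ?_) x
    · refine gr_ind d2 (p := fun y => p (x ⊗ₜ[k] y)) (fun j y hy => hom i j x hx y hy)
        (fun y y' h h' => ?_) y
      rw [TensorProduct.tmul_add]; exact add _ _ h h'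
    · rw [TensorProduct.add_tmul]; exact add _ _ h h'

/-- induction on the homogeneous pieces of a tensor product -/
theorem tensor_gr_ind {g1 : ℤ → Submodule k M} {g2 : ℤ → Submodule k N}
    {g : ℤ → Submodule k (M ⊗[k] N)}
    (hg : ∀ n : ℤ, g n = Submodule.span k {z : M ⊗[k] N |
      ∃ (i j : ℤ) (a : M) (b : N), i + j = n ∧ a ∈ g1 i ∧ b ∈ g2 j ∧ z = a ⊗ₜ[k] b})
    {n : ℤ} {p : M ⊗[k] N → Prop}
    (hom : ∀ i j, i + j = n → ∀ x ∈ g1 i, ∀ y ∈ g2 j, p (x ⊗ₜ[k] y))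
    (zero : p 0)
    (add : ∀ x y, p x → p y → p (x + y)) (smul : ∀ (c : k) x, p x → p (c • x))
    {z : M ⊗[k] N} (hz : z ∈ g n) : p z := by
  rw [hg] at hz
  induction hz using Submodule.span_induction with
  | mem x h => obtain ⟨i, j, a, b, h1, h2, h3, rfl⟩ := h; exact hom i j h1 a h2 b h3
  | zero => exact zero
  | add x y _ _ h1 h2 => exact add _ _ h1 h2
  | smul c x _ h => exact smul c x h

theorem tmul_mem_gr {g1 : ℤ → Submodule k M} {g2 : ℤ → Submodule k N}
    {g : ℤ → Submodule k (M ⊗[k] N)}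
    (hg : ∀ n : ℤ, g n = Submodule.span k {z : M ⊗[k] N |
      ∃ (i j : ℤ) (a : M) (b : N), i + j = n ∧ a ∈ g1 i ∧ b ∈ g2 j ∧ z = a ⊗ₜ[k] b})
    {i j : ℤ} {a : M} {b : N} (ha : a ∈ g1 i) (hb : b ∈ g2 j) : a ⊗ₜ[k] b ∈ g (i + j) := by
  rw [hg]; exact Submodule.subset_span ⟨i, j, a, b, rfl, ha, hb, rfl⟩

end Gr

section EnvLemmas

variable {M N : Type u} [AddCommGroup M] [Module k M] [AddCommGroup N] [Module k N]

theorem DGPAOn.br_one (P : DGPAOn k M) (a : M) : P.br a P.one = 0 := by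
  refine gr_ind P.decomp (p := fun a => P.br a P.one = 0) (fun i a ha => ?_)
    (fun x y h h' => ?_) a
  · have := P.br_deriv ha P.one_mem P.one_mem
    simpa [P.one_mul, P.mul_one] using this
  · rw [map_add, LinearMap.add_apply, h, h', add_zero]

theorem DGPAOn.one_br (P : DGPAOn k M) (a : M) : P.br P.one a = 0 := by
  refine gr_ind P.decomp (p := fun a => P.br P.one a = 0) (fun i a ha => ?_)
    (fun x y h h' => ?_) a
  · rw [P.br_antisymm P.one_mem ha, P.br_one]; simp
  · rw [map_add, h, h', add_zero]

theorem DGPAOn.d_one (P : DGPAOn k M) : P.d P.one = 0 := by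
  have := P.d_mul P.one_mem P.one_mem
  simpa [P.one_mul, P.mul_one] using this

theorem DGAOn.d_one (P : DGAOn k M) : P.d P.one = 0 := by
  have := P.d_mul P.one_mem P.one_mem
  simpa [P.one_mul, P.mul_one] using this

variable (P : DGPAOn k M)

theorem mgen_one : mgen P P.one = 1 := by
  have := RingQuot.mkAlgHom_rel k (EnvRel.relone (P := P))
  simpa [mgen] using this

theorem mgen_mul (a b : M) : mgen P (P.mul a b) = mgen P a * mgen P b := by
  have := RingQuot.mkAlgHom_rel k (EnvRel.relmul (P := P) a b)
  simpa [mgen] using this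

variable {P}

theorem hgen_mul {i j : ℤ} {a b : M} (ha : a ∈ P.gr i) (hb : b ∈ P.gr j) :
    hgen P (P.mul a b) = mgen P a * hgen P b + ((-1 : k) ^ (i * j)) • (mgen P b * hgen P a) := by
  have := RingQuot.mkAlgHom_rel k (EnvRel.relhmul (P := P) ha hb)
  simpa [mgen, hgen] using this

theorem mgen_br {i j : ℤ} {a b : M} (ha : a ∈ P.gr i) (hb : b ∈ P.gr j) :
    mgen P (P.br a b) = hgen P a * mgen P b - ((-1 : k) ^ (i * j)) • (mgen P b * hgen P a) := by
  have := RingQuot.mkAlgHom_rel k (EnvRel.relmbr (P := P) ha hb)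
  simpa [mgen, hgen] using this

theorem hgen_br {i j : ℤ} {a b : M} (ha : a ∈ P.gr i) (hb : b ∈ P.gr j) :
    hgen P (P.br a b) = hgen P a * hgen P b - ((-1 : k) ^ (i * j)) • (hgen P b * hgen P a) := by
  have := RingQuot.mkAlgHom_rel k (EnvRel.relhbr (P := P) ha hb)
  simpa [hgen] using this

theorem hgen_one : hgen P P.one = 0 := by
  have := hgen_mul P.one_mem P.one_mem
  simpa [P.one_mul, mgen_one] using this

theorem env_ind {p : Env P → Prop} (one : p 1) (hm : ∀ a, p (mgen P a)) (hh : ∀ a, p (hgen P a))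
    (add : ∀ x y, p x → p y → p (x + y)) (smul : ∀ (c : k) x, p x → p (c • x))
    (mul : ∀ x y, p x → p y → p (x * y)) (x : Env P) : p x := by
  obtain ⟨t, rfl⟩ := RingQuot.mkAlgHom_surjective k (EnvRel P) x
  induction t using TensorAlgebra.induction with
  | algebraMap r =>
    rw [AlgHom.commutes, Algebra.algebraMap_eq_smul_one]; exact smul _ _ one
  | ι v =>
    have : RingQuot.mkAlgHom k (EnvRel P) (TensorAlgebra.ι k v) = mgen P v.1 + hgen P v.2 := by
      simp only [mgen, hgen, LinearMap.comp_apply, AlgHom.toLinearMap_apply]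
      rw [← map_add, ← map_add]; simp
    rw [this]; exact add _ _ (hm _) (hh _)
  | mul a b h1 h2 => rw [map_mul]; exact mul _ _ h1 h2
  | add a b h1 h2 => rw [map_add]; exact add _ _ h1 h2

theorem env_hom_ind {E : DGAOn k (Env P)} (hE : IsEnvDGA P E) {p : ℤ → Env P → Prop}
    (one : p 0 1) (hm : ∀ i, ∀ a ∈ P.gr i, p i (mgen P a))
    (hh : ∀ i, ∀ a ∈ P.gr i, p i (hgen P a)) (zero : ∀ i, p i 0)
    (add : ∀ i x y, p i x → p i y → p i (x + y)) (smul : ∀ i (c : k) x, p i x → p i (c • x))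
    (mul : ∀ i j x y, x ∈ E.gr i → y ∈ E.gr j → p i x → p j y → p (i + j) (x * y))
    {n : ℤ} {x : Env P} (hx : x ∈ E.gr n) : p n x := by
  obtain ⟨h1, h2, h3, h4, h5, h6⟩ := hE
  let H : ℤ → Submodule k (Env P) := fun i =>
    { carrier := {x | x ∈ E.gr i ∧ p i x}
      zero_mem' := ⟨Submodule.zero_mem _, zero i⟩
      add_mem' := fun ha hb => ⟨Submodule.add_mem _ ha.1 hb.1, add _ _ _ ha.2 hb.2⟩
      smul_mem' := fun c x ha => ⟨Submodule.smul_mem _ c ha.1, smul _ _ _ ha.2⟩ }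
  have hmem : ∀ i x, x ∈ E.gr i → p i x → x ∈ ⨆ n, H n := fun i x hx hp =>
    Submodule.mem_iSup_of_mem i (show x ∈ H i from ⟨hx, hp⟩)
  have htop : ∀ x, x ∈ ⨆ n, H n := by
    refine env_ind ?_ ?_ ?_ ?_ ?_ ?_
    · exact hmem 0 1 (h2 ▸ E.one_mem) one
    · refine gr_ind P.decomp (fun i a ha => hmem i _ (h3 ha) (hm i a ha)) (fun a b ha hb => ?_)
      rw [map_add]; exact Submodule.add_mem _ ha hb
    · refine gr_ind P.decomp (fun i a ha => hmem i _ (h4 ha) (hh i a ha)) (fun a b ha hb => ?_)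
      rw [map_add]; exact Submodule.add_mem _ ha hb
    · exact fun x y => Submodule.add_mem _
    · exact fun c x => Submodule.smul_mem _ c
    · intro x y hx hy
      induction hx using Submodule.iSup_induction' with
      | zero => rw [zero_mul]; exact Submodule.zero_mem _
      | add x x' _ _ h h' => rw [add_mul]; exact Submodule.add_mem _ h h'
      | mem i x hx =>
        induction hy using Submodule.iSup_induction' with
        | zero => rw [mul_zero]; exact Submodule.zero_mem _
        | add x x' _ _ h h' => rw [mul_add]; exact Submodule.add_mem _ h h'
        | mem j y hy =>
          refine hmem (i + j) _ ?_ (mul i j x y hx.1 hy.1 hx.2 hy.2)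
          rw [← h1]; exact E.mul_mem hx.1 hy.1
  exact (gr_le E.decomp (H := H) (fun n x hx => hx.1) htop n hx).2

theorem env_pair {E : DGAOn k (Env P)} (hE : IsEnvDGA P E) :
    UEPair P E (mgen P) (hgen P) := by
  obtain ⟨h1, h2, h3, h4, h5, h6⟩ := hE
  refine ⟨h3, h4, ?_, ?_, fun a => (h5 a).symm, fun a => (h6 a).symm, ?_, ?_, ?_⟩
  · intro a b; rw [h1, mgen_mul]
  · rw [h2, mgen_one]
  · intro i j a b ha hb; rw [h1, h1, hgen_br ha hb]
  · intro i j a b ha hb; rw [h1, h1, mgen_br ha hb]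
  · intro i j a b ha hb; rw [h1, h1, hgen_mul ha hb]

theorem env_lift {D : DGAOn k N} {f g : M →ₗ[k] N} (h : UEPair P D f g) :
    ∃ φ : Env P →ₗ[k] N, φ 1 = D.one ∧ (∀ x y, φ (x * y) = D.mul (φ x) (φ y)) ∧
      (∀ a, φ (mgen P a) = f a) ∧ (∀ a, φ (hgen P a) = g a) := by
  obtain ⟨-, -, h3, h4, -, -, h7, h8, h9⟩ := h
  let T : (M × M) →ₗ[k] Module.End k N := (D.mul ∘ₗ f).coprod (D.mul ∘ₗ g)
  have hT1 : ∀ a, T (a, 0) = D.mul (f a) := fun a => by simp [T]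
  have hT2 : ∀ a, T (0, a) = D.mul (g a) := fun a => by simp [T]
  have hrel : ∀ ⦃x y⦄, EnvRel P x y → TensorAlgebra.lift k T x = TensorAlgebra.lift k T y := by
    intro x y hxy
    cases hxy with
    | relone =>
      ext v
      rw [TensorAlgebra.lift_ι_apply, hT1, h4, map_one]; exact D.one_mul v
    | relmul a b =>
      ext v
      simp only [TensorAlgebra.lift_ι_apply, hT1, map_mul, h3, Module.End.mul_apply, D.mul_assoc]
    | relhmul ha hb =>
      ext v
      simp only [TensorAlgebra.lift_ι_apply, hT1, hT2, map_mul, map_add, map_smul, h9 ha hb,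
        Module.End.mul_apply, D.mul_assoc, LinearMap.add_apply, LinearMap.smul_apply]
    | relmbr ha hb =>
      ext v
      simp only [TensorAlgebra.lift_ι_apply, hT1, hT2, map_mul, map_sub, map_smul, h8 ha hb,
        Module.End.mul_apply, D.mul_assoc, LinearMap.sub_apply, LinearMap.smul_apply]
    | relhbr ha hb =>
      ext v
      simp only [TensorAlgebra.lift_ι_apply, hT1, hT2, map_mul, map_sub, map_smul, h7 ha hb,
        Module.End.mul_apply, D.mul_assoc, LinearMap.sub_apply, LinearMap.smul_apply]
  let Φ : Env P →ₐ[k] Module.End k N := RingQuot.liftAlgHom k ⟨TensorAlgebra.lift k T, hrel⟩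
  have hΦm : ∀ a, Φ (mgen P a) = D.mul (f a) := fun a => by
    simp only [Φ, mgen, LinearMap.comp_apply, AlgHom.toLinearMap_apply]
    rw [RingQuot.liftAlgHom_mkAlgHom_apply, TensorAlgebra.lift_ι_apply]; exact hT1 a
  have hΦh : ∀ a, Φ (hgen P a) = D.mul (g a) := fun a => by
    simp only [Φ, hgen, LinearMap.comp_apply, AlgHom.toLinearMap_apply]
    rw [RingQuot.liftAlgHom_mkAlgHom_apply, TensorAlgebra.lift_ι_apply]; exact hT2 a
  have key : ∀ x, ∀ v, Φ x v = D.mul (Φ x D.one) v := by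
    refine env_ind ?_ ?_ ?_ ?_ ?_ ?_
    · intro v; simp [D.one_mul]
    · intro a v; rw [hΦm, D.mul_one]
    · intro a v; rw [hΦh, D.mul_one]
    · intro x y hx hy v
      simp only [map_add, LinearMap.add_apply]; rw [hx, hy]
    · intro c x hx v
      simp only [map_smul, LinearMap.smul_apply]; rw [hx]
    · intro x y hx hy v
      simp only [map_mul, Module.End.mul_apply]
      rw [hx, hy, hx (Φ y D.one), D.mul_assoc]
  refine ⟨(LinearMap.applyₗ D.one) ∘ₗ Φ.toLinearMap, ?_, ?_, ?_, ?_⟩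
  · simp
  · intro x y
    simp only [LinearMap.comp_apply, AlgHom.toLinearMap_apply, LinearMap.applyₗ_apply_apply,
      map_mul, Module.End.mul_apply]
    exact key _ _
  · intro a; simp [hΦm, D.mul_one]
  · intro a; simp [hΦh, D.mul_one]

theorem env_isUEnv {E : DGAOn k (Env P)} (hE : IsEnvDGA P E) :
    IsUEnv P E (mgen P) (hgen P) := by
  refine ⟨env_pair hE, ?_⟩
  intro D' _ _ D f g h
  obtain ⟨φ, h1, hmul, hm, hh⟩ := env_lift h
  obtain ⟨e1, e2, e3, e4, e5, e6⟩ := hE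
  have key : ∀ n : ℤ, ∀ x ∈ E.gr n, φ x ∈ D.gr n ∧ φ (E.d x) = D.d (φ x) := by
    intro n x hx
    refine env_hom_ind (E := E) ⟨e1, e2, e3, e4, e5, e6⟩
      (p := fun n x => φ x ∈ D.gr n ∧ φ (E.d x) = D.d (φ x)) ?_ ?_ ?_ ?_ ?_ ?_ ?_ hx
    · rw [h1]; refine ⟨D.one_mem, ?_⟩
      rw [← e2, E.d_one, D.d_one, map_zero]
    · intro i a ha
      rw [e5, hm, hm]; exact ⟨h.1 ha, h.2.2.2.2.1 a⟩
    · intro i a ha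
      rw [e6, hh, hh]; exact ⟨h.2.1 ha, h.2.2.2.2.2.1 a⟩
    · intro i; simp
    · intro i x y hx hy
      refine ⟨?_, ?_⟩
      · rw [map_add]; exact Submodule.add_mem _ hx.1 hy.1
      · simp only [map_add, hx.2, hy.2]
    · intro i c x hx
      refine ⟨?_, ?_⟩
      · rw [map_smul]; exact Submodule.smul_mem _ _ hx.1
      · simp only [map_smul, hx.2]
    · intro i j x y hx hy px py
      refine ⟨?_, ?_⟩
      · rw [hmul]; exact D.mul_mem px.1 py.1
      · rw [hmul, D.d_mul px.1 py.1, ← e1, E.d_mul hx hy, map_add, map_smul, e1, e1, hmul, hmul,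
          px.2, py.2]
  refine ⟨φ, ⟨⟨fun hx => (key _ _ hx).1, fun x y => by rw [e1, hmul], by rw [e2, h1], ?_⟩,
    hm, hh⟩, ?_⟩
  · refine gr_ind E.decomp (fun i x hx => (key i x hx).2) (fun x y hx hy => ?_)
    simp only [map_add, hx, hy]
  · rintro ψ ⟨⟨-, p2, p3, -⟩, p5, p6⟩
    ext x
    refine env_ind (p := fun x => ψ x = φ x) ?_ ?_ ?_ ?_ ?_ ?_ x
    · rw [h1, ← e2, p3]
    · intro a; rw [p5, hm]
    · intro a; rw [p6, hh]
    · intro x y hx hy; rw [map_add, map_add, hx, hy]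
    · intro c x hx; rw [map_smul, map_smul, hx]
    · intro x y hx hy; rw [← e1, p2, hx, hy, e1, hmul]

end EnvLemmas

end Helpers

section TensorPair

variable {k : Type u} [Field k]
variable {M : Type u} [AddCommGroup M] [Module k M]

theorem env_neg {P : DGPAOn k M} (x : Env P) : (-1 : k) • x = -x := neg_one_smul k x

theorem env_tneg {M' : Type u} [AddCommGroup M'] [Module k M'] {P : DGPAOn k M}
    {Q : DGPAOn k M'} (x : Env P ⊗[k] Env Q) : (-1 : k) • x = -x := neg_one_smul k x

theorem env_neg_tmul {M' : Type u} [AddCommGroup M'] [Module k M'] {P : DGPAOn k M}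
    {Q : DGPAOn k M'} (x : Env P) (y : Env Q) : (-x) ⊗ₜ[k] y = -(x ⊗ₜ[k] y) :=
  TensorProduct.neg_tmul x y

theorem env_tmul_neg {M' : Type u} [AddCommGroup M'] [Module k M'] {P : DGPAOn k M}
    {Q : DGPAOn k M'} (x : Env P) (y : Env Q) : x ⊗ₜ[k] (-y) = -(x ⊗ₜ[k] y) :=
  TensorProduct.tmul_neg x y

theorem mgen_swap {P : DGPAOn k M} {i j : ℤ} {a b : M} (ha : a ∈ P.gr i) (hb : b ∈ P.gr j) :
    mgen P b * mgen P a = ((-1 : k) ^ (i * j)) • (mgen P a * mgen P b) := by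
  rw [← mgen_mul, ← mgen_mul, P.mul_comm hb ha, map_smul, mul_comm j i]

theorem hm_swap {P : DGPAOn k M} {i j : ℤ} {a b : M} (ha : a ∈ P.gr i) (hb : b ∈ P.gr j) :
    hgen P b * mgen P a = ((-1 : k) ^ (i * j)) • (mgen P a * hgen P b)
      - ((-1 : k) ^ (i * j)) • (hgen P a * mgen P b) + mgen P b * hgen P a := by
  have h1 := mgen_br ha hb
  have h2 := mgen_br hb ha
  rw [P.br_antisymm hb ha, map_neg, map_smul, h1, mul_comm j i] at h2
  rcases sgn_cases (k := k) (i * j) with h | h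
  · rw [h] at h2 ⊢
    simp only [one_smul] at h2 ⊢
    have := sub_eq_iff_eq_add.mp h2.symm
    rw [this]; abel
  · rw [h] at h2 ⊢
    simp only [env_neg] at h2 ⊢
    have := sub_eq_iff_eq_add.mp h2.symm
    rw [this]; abel

variable {A B : Type u} [AddCommGroup A] [Module k A] [AddCommGroup B] [Module k B]
    {P : DGPAOn k A} {Q : DGPAOn k B} {R : DGPAOn k (A ⊗[k] B)}
    {EP : DGAOn k (Env P)} {EQ : DGAOn k (Env Q)} {G : DGAOn k (Env P ⊗[k] Env Q)}

theorem sgn4 (i j i' j' : ℤ) : (-1 : k) ^ ((i + j) * (i' + j')) =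
    (-1 : k) ^ (i * i') * (-1 : k) ^ (i * j') * ((-1 : k) ^ (i' * j) * (-1 : k) ^ (j * j')) := by
  rw [add_mul, mul_add, mul_add, sgn_add, sgn_add, sgn_add, mul_comm j i']

/-- Extending an identity for homogeneous elements from pure tensors. -/
theorem gr_ext2 {N : Type u} [AddCommGroup N] [Module k N] (hR : IsTensorDGPA P Q R)
    (D : DGAOn k N) (op : (A ⊗[k] B) →ₗ[k] (A ⊗[k] B) →ₗ[k] (A ⊗[k] B))
    (w u v u' v' : (A ⊗[k] B) →ₗ[k] N) (e : k)
    (h : ∀ i j i' j' : ℤ, ∀ a ∈ P.gr i, ∀ b ∈ Q.gr j, ∀ a' ∈ P.gr i', ∀ b' ∈ Q.gr j',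
      w (op (a ⊗ₜ[k] b) (a' ⊗ₜ[k] b')) = D.mul (u (a ⊗ₜ[k] b)) (v (a' ⊗ₜ[k] b')) +
        e • ((-1 : k) ^ ((i + j) * (i' + j'))) • D.mul (u' (a' ⊗ₜ[k] b')) (v' (a ⊗ₜ[k] b)))
    {n n' : ℤ} {x y : A ⊗[k] B} (hx : x ∈ R.gr n) (hy : y ∈ R.gr n') :
    w (op x y) = D.mul (u x) (v y) + e • ((-1 : k) ^ (n * n')) • D.mul (u' y) (v' x) := by
  refine tensor_gr_ind (p := fun x => w (op x y) = D.mul (u x) (v y) +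
    e • ((-1 : k) ^ (n * n')) • D.mul (u' y) (v' x)) hR.1 ?_ ?_ ?_ ?_ hx
  · rintro i j rfl a ha b hb
    refine tensor_gr_ind (p := fun y => w (op (a ⊗ₜ[k] b) y) = D.mul (u (a ⊗ₜ[k] b)) (v y) +
      e • ((-1 : k) ^ ((i + j) * n')) • D.mul (u' y) (v' (a ⊗ₜ[k] b))) hR.1 ?_ ?_ ?_ ?_ hy
    · rintro i' j' rfl a' ha' b' hb'
      exact h i j i' j' a ha b hb a' ha' b' hb'
    · simp
    · intro x y h1 h2; simp only [map_add, LinearMap.add_apply, h1, h2]; module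
    · intro c x h1; simp only [map_smul, LinearMap.smul_apply, h1]; module
  · simp
  · intro x y h1 h2; simp only [map_add, LinearMap.add_apply, h1, h2]; module
  · intro c x h1; simp only [map_smul, LinearMap.smul_apply, h1]; module

set_option maxHeartbeats 4000000 in
theorem tensor_pair (hR : IsTensorDGPA P Q R) (hEP : IsEnvDGA P EP) (hEQ : IsEnvDGA Q EQ)
    (hG : IsTensorDGA EP EQ G) :
    UEPair R G (TensorProduct.map (mgen P) (mgen Q))
      (TensorProduct.map (mgen P) (hgen Q) + TensorProduct.map (hgen P) (mgen Q)) := by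
  obtain ⟨r1, r2, r3, r4, r5⟩ := id hR
  obtain ⟨p1, p2, p3, p4, p5, p6⟩ := hEP
  obtain ⟨q1, q2, q3, q4, q5, q6⟩ := hEQ
  obtain ⟨g1, g2, g3, g4⟩ := hG
  have g3 : ∀ {i j i' j' : ℤ} {x x' : Env P} {y y' : Env Q},
      x ∈ EP.gr i → y ∈ EQ.gr j → x' ∈ EP.gr i' → y' ∈ EQ.gr j' →
      G.mul (x ⊗ₜ[k] y) (x' ⊗ₜ[k] y') = ((-1 : k) ^ (i' * j)) • ((x * x') ⊗ₜ[k] (y * y')) := by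
    intro i j i' j' x x' y y' h1 h2 h3 h4
    rw [g3 h1 h2 h3 h4, p1, q1]
  refine ⟨?_, ?_, ?_, ?_, ?_, ?_, ?_, ?_, ?_⟩
  · intro n x hx
    refine tensor_gr_ind (p := fun x => TensorProduct.map (mgen P) (mgen Q) x ∈ G.gr n)
      r1 ?_ ?_ ?_ ?_ hx
    · rintro i j rfl a ha b hb
      exact tmul_mem_gr g1 (p3 ha) (q3 hb)
    · simp
    · intro x y h1 h2; rw [map_add]; exact Submodule.add_mem _ h1 h2
    · intro c x h1; rw [map_smul]; exact Submodule.smul_mem _ _ h1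
  · intro n x hx
    refine tensor_gr_ind (p := fun x => (TensorProduct.map (mgen P) (hgen Q) +
        TensorProduct.map (hgen P) (mgen Q)) x ∈ G.gr n) r1 ?_ ?_ ?_ ?_ hx
    · rintro i j rfl a ha b hb
      exact Submodule.add_mem _ (tmul_mem_gr g1 (p3 ha) (q4 hb)) (tmul_mem_gr g1 (p4 ha) (q3 hb))
    · simp
    · intro x y h1 h2; rw [map_add]; exact Submodule.add_mem _ h1 h2
    · intro c x h1; rw [map_smul]; exact Submodule.smul_mem _ _ h1
  · intro x y
    refine tensor_ind P.decomp Q.decomp (p := fun x => TensorProduct.map (mgen P) (mgen Q)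
      (R.mul x y) = G.mul (TensorProduct.map (mgen P) (mgen Q) x) _) ?_ ?_ x
    · intro i j a ha b hb
      refine tensor_ind P.decomp Q.decomp (p := fun y => TensorProduct.map (mgen P) (mgen Q)
        (R.mul (a ⊗ₜ[k] b) y) = G.mul _ (TensorProduct.map (mgen P) (mgen Q) y)) ?_ ?_ y
      · intro i' j' a' ha' b' hb'
        rw [r3 ha hb ha' hb', map_smul, TensorProduct.map_tmul, TensorProduct.map_tmul,
          TensorProduct.map_tmul, g3 (p3 ha) (q3 hb) (p3 ha') (q3 hb'), mgen_mul, mgen_mul]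
      · intro x y h1 h2; simp only [map_add, h1, h2]
    · intro x y h1 h2; simp only [map_add, LinearMap.add_apply, h1, h2]
  · rw [r2, g2, TensorProduct.map_tmul, mgen_one, mgen_one, p2, q2]
  · refine tensor_ind P.decomp Q.decomp ?_ ?_
    · intro i j a ha b hb
      rw [r4 ha hb, map_add, map_smul, TensorProduct.map_tmul, TensorProduct.map_tmul,
        TensorProduct.map_tmul, g4 (p3 ha) (q3 hb), p5, q5]
    · intro x y h1 h2; simp only [map_add, h1, h2]
  · refine tensor_ind P.decomp Q.decomp ?_ ?_
    · intro i j a ha b hb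
      simp only [r4 ha hb, map_add, map_smul, LinearMap.add_apply, TensorProduct.map_tmul,
        g4 (p3 ha) (q4 hb), g4 (p4 ha) (q3 hb), p5, q5, p6, q6]
      module
    · intro x y h1 h2; simp only [map_add, h1, h2]
  · intro n n' x y hx hy
    have := gr_ext2 hR G R.br (TensorProduct.map (mgen P) (hgen Q) + TensorProduct.map (hgen P) (mgen Q))
      (TensorProduct.map (mgen P) (hgen Q) + TensorProduct.map (hgen P) (mgen Q))
      (TensorProduct.map (mgen P) (hgen Q) + TensorProduct.map (hgen P) (mgen Q))
      (TensorProduct.map (mgen P) (hgen Q) + TensorProduct.map (hgen P) (mgen Q))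
      (TensorProduct.map (mgen P) (hgen Q) + TensorProduct.map (hgen P) (mgen Q)) (-1) ?_ hx hy
    · rw [neg_one_smul, ← sub_eq_add_neg] at this
      exact this
    intro i j i' j' a ha b hb a' ha' b' hb'
    simp only [      r5 ha hb ha' hb', LinearMap.add_apply,
      map_add, map_smul, TensorProduct.map_tmul, 
      g3 (p3 ha) (q4 hb) (p3 ha') (q4 hb'), g3 (p3 ha) (q4 hb) (p4 ha') (q3 hb'),
      g3 (p4 ha) (q3 hb) (p3 ha') (q4 hb'), g3 (p4 ha) (q3 hb) (p4 ha') (q3 hb'),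
      g3 (p3 ha') (q4 hb') (p3 ha) (q4 hb), g3 (p3 ha') (q4 hb') (p4 ha) (q3 hb),
      g3 (p4 ha') (q3 hb') (p3 ha) (q4 hb), g3 (p4 ha') (q3 hb') (p4 ha) (q3 hb),
      sgn4, mgen_mul, hgen_mul ha ha', hgen_mul hb hb', mgen_br ha ha', mgen_br hb hb',
      hgen_br ha ha', hgen_br hb hb', mgen_swap ha ha', mgen_swap hb hb', hm_swap ha ha',
      hm_swap hb hb']
    rcases sgn_cases (k := k) (i * i') with s1 | s1 <;>
    rcases sgn_cases (k := k) (i * j') with s2 | s2 <;>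
    rcases sgn_cases (k := k) (i' * j) with s3 | s3 <;>
    rcases sgn_cases (k := k) (j * j') with s4 | s4 <;>
    · simp only [s1, s2, s3, s4, TensorProduct.add_tmul, TensorProduct.tmul_add,
        TensorProduct.sub_tmul, TensorProduct.tmul_sub, one_smul, env_neg, env_tneg,
        env_neg_tmul, env_tmul_neg, mul_one, mul_neg, neg_neg]
      abel
  · intro n n' x y hx hy
    have := gr_ext2 hR G R.br (TensorProduct.map (mgen P) (mgen Q))
      (TensorProduct.map (mgen P) (hgen Q) + TensorProduct.map (hgen P) (mgen Q))
      (TensorProduct.map (mgen P) (mgen Q))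
      (TensorProduct.map (mgen P) (mgen Q))
      (TensorProduct.map (mgen P) (hgen Q) + TensorProduct.map (hgen P) (mgen Q)) (-1) ?_ hx hy
    · rw [neg_one_smul, ← sub_eq_add_neg] at this
      exact this
    intro i j i' j' a ha b hb a' ha' b' hb'
    simp only [      r5 ha hb ha' hb', LinearMap.add_apply,
      map_add, map_smul, TensorProduct.map_tmul, 
      g3 (p3 ha) (q4 hb) (p3 ha') (q3 hb'), g3 (p4 ha) (q3 hb) (p3 ha') (q3 hb'),
      g3 (p3 ha') (q3 hb') (p3 ha) (q4 hb), g3 (p3 ha') (q3 hb') (p4 ha) (q3 hb),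
      sgn4, mgen_mul, mgen_br ha ha', mgen_br hb hb', mgen_swap ha ha', mgen_swap hb hb']
    rcases sgn_cases (k := k) (i * i') with s1 | s1 <;>
    rcases sgn_cases (k := k) (i * j') with s2 | s2 <;>
    rcases sgn_cases (k := k) (i' * j) with s3 | s3 <;>
    rcases sgn_cases (k := k) (j * j') with s4 | s4 <;>
    · simp only [s1, s2, s3, s4, TensorProduct.add_tmul, TensorProduct.tmul_add,
        TensorProduct.sub_tmul, TensorProduct.tmul_sub, one_smul, env_neg, env_tneg,
        env_neg_tmul, env_tmul_neg, mul_one, mul_neg, neg_neg]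
      abel
  · intro n n' x y hx hy
    have := gr_ext2 hR G R.mul (TensorProduct.map (mgen P) (hgen Q) + TensorProduct.map (hgen P) (mgen Q))
      (TensorProduct.map (mgen P) (mgen Q))
      (TensorProduct.map (mgen P) (hgen Q) + TensorProduct.map (hgen P) (mgen Q))
      (TensorProduct.map (mgen P) (mgen Q))
      (TensorProduct.map (mgen P) (hgen Q) + TensorProduct.map (hgen P) (mgen Q)) (1) ?_ hx hy
    · rw [one_smul] at this
      exact this
    intro i j i' j' a ha b hb a' ha' b' hb'
    simp only [      r3 ha hb ha' hb', LinearMap.add_apply,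
      map_add, map_smul, TensorProduct.map_tmul, 
      g3 (p3 ha) (q3 hb) (p3 ha') (q4 hb'), g3 (p3 ha) (q3 hb) (p4 ha') (q3 hb'),
      g3 (p3 ha') (q3 hb') (p3 ha) (q4 hb), g3 (p3 ha') (q3 hb') (p4 ha) (q3 hb),
      sgn4, mgen_mul, hgen_mul ha ha', hgen_mul hb hb', mgen_swap ha ha', mgen_swap hb hb']
    rcases sgn_cases (k := k) (i * i') with s1 | s1 <;>
    rcases sgn_cases (k := k) (i * j') with s2 | s2 <;>
    rcases sgn_cases (k := k) (i' * j) with s3 | s3 <;>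
    rcases sgn_cases (k := k) (j * j') with s4 | s4 <;>
    · simp only [s1, s2, s3, s4, TensorProduct.add_tmul, TensorProduct.tmul_add,
        TensorProduct.sub_tmul, TensorProduct.tmul_sub, one_smul, env_neg, env_tneg,
        env_neg_tmul, env_tmul_neg, mul_one, mul_neg, neg_neg]
      abel

end TensorPair

section Universal

variable {k : Type u} [Field k] {N : Type u} [AddCommGroup N] [Module k N]

/-- graded commutation of two elements of a differential graded algebra -/
def GComm (D : DGAOn k N) (i j : ℤ) (u v : N) : Prop :=
  D.mul u v = ((-1 : k) ^ (i * j)) • D.mul v u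

theorem GComm.symm {D : DGAOn k N} {i j : ℤ} {u v : N} (h : GComm D i j u v) :
    GComm D j i v u := by
  unfold GComm at *
  rw [h, smul_smul, mul_comm j i]
  rcases sgn_cases (k := k) (i * j) with s | s <;> simp [s]

theorem GComm.zero {D : DGAOn k N} {i j : ℤ} {u : N} : GComm D i j u 0 := by
  simp [GComm]

theorem GComm.one {D : DGAOn k N} {i : ℤ} {u : N} : GComm D i 0 u D.one := by
  simp [GComm, D.one_mul, D.mul_one]

theorem GComm.add {D : DGAOn k N} {i j : ℤ} {u v v' : N} (h : GComm D i j u v)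
    (h' : GComm D i j u v') : GComm D i j u (v + v') := by
  unfold GComm at *
  rw [map_add, h, h', map_add, LinearMap.add_apply, smul_add]

theorem GComm.smul {D : DGAOn k N} {i j : ℤ} {u v : N} (c : k) (h : GComm D i j u v) :
    GComm D i j u (c • v) := by
  unfold GComm at *
  rw [map_smul, h, map_smul, LinearMap.smul_apply, smul_comm]

theorem GComm.mul {D : DGAOn k N} {i j j' : ℤ} {u v v' : N} (h : GComm D i j u v)
    (h' : GComm D i j' u v') : GComm D i (j + j') u (D.mul v v') := by
  unfold GComm at *
  rw [← D.mul_assoc, h, map_smul, LinearMap.smul_apply, D.mul_assoc, h', map_smul, mul_add,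
    sgn_add, D.mul_assoc, smul_smul]

/-- graded commutation extends from the generators to the enveloping algebra -/
theorem env_gcomm {M : Type u} [AddCommGroup M] [Module k M] {P : DGPAOn k M}
    {E : DGAOn k (Env P)} (hE : IsEnvDGA P E) {D : DGAOn k N} {φ : Env P →ₗ[k] N}
    (hφ : IsDGAHom E D φ) {i : ℤ} {u : N}
    (hm : ∀ j, ∀ b ∈ P.gr j, GComm D i j u (φ (mgen P b)))
    (hh : ∀ j, ∀ b ∈ P.gr j, GComm D i j u (φ (hgen P b)))
    {j : ℤ} {y : Env P} (hy : y ∈ E.gr j) : GComm D i j u (φ y) := by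
  refine env_hom_ind hE (p := fun j y => GComm D i j u (φ y)) ?_ hm hh ?_ ?_ ?_ ?_ hy
  · rw [← hE.2.1, hφ.2.2.1]; exact GComm.one
  · intro i; rw [map_zero]; exact GComm.zero
  · intro i x y hx hy; rw [map_add]; exact hx.add hy
  · intro i c x hx; rw [map_smul]; exact hx.smul c
  · intro i j x y _ _ hx hy; rw [← hE.1, hφ.2.1]; exact hx.mul hy

variable {A B : Type u} [AddCommGroup A] [Module k A] [AddCommGroup B] [Module k B]
    {P : DGPAOn k A} {Q : DGPAOn k B} {R : DGPAOn k (A ⊗[k] B)}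
    {EP : DGAOn k (Env P)} {EQ : DGAOn k (Env Q)} {G : DGAOn k (Env P ⊗[k] Env Q)}

theorem mem_left (hR : IsTensorDGPA P Q R) {i : ℤ} {a : A} (ha : a ∈ P.gr i) :
    a ⊗ₜ[k] Q.one ∈ R.gr i := by
  simpa using tmul_mem_gr hR.1 ha Q.one_mem

theorem mem_right (hR : IsTensorDGPA P Q R) {i : ℤ} {b : B} (hb : b ∈ Q.gr i) :
    P.one ⊗ₜ[k] b ∈ R.gr i := by
  simpa using tmul_mem_gr hR.1 P.one_mem hb

theorem mul_lr (hR : IsTensorDGPA P Q R) {i j : ℤ} {a : A} {b : B}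
    (ha : a ∈ P.gr i) (hb : b ∈ Q.gr j) :
    R.mul (a ⊗ₜ[k] Q.one) (P.one ⊗ₜ[k] b) = a ⊗ₜ[k] b := by
  rw [hR.2.2.1 ha Q.one_mem P.one_mem hb, P.mul_one, Q.one_mul]; simp

theorem br_lr (hR : IsTensorDGPA P Q R) {i j : ℤ} {a : A} {b : B}
    (ha : a ∈ P.gr i) (hb : b ∈ Q.gr j) :
    R.br (a ⊗ₜ[k] Q.one) (P.one ⊗ₜ[k] b) = 0 := by
  rw [hR.2.2.2.2 ha Q.one_mem P.one_mem hb, P.br_one, Q.one_br]; simp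

theorem br_rl (hR : IsTensorDGPA P Q R) {i j : ℤ} {a : A} {b : B}
    (ha : a ∈ P.gr i) (hb : b ∈ Q.gr j) :
    R.br (P.one ⊗ₜ[k] b) (a ⊗ₜ[k] Q.one) = 0 := by
  rw [hR.2.2.2.2 P.one_mem hb ha Q.one_mem, P.one_br, Q.br_one]; simp

theorem ext_bil {M : Type u} [AddCommGroup M] [Module k M] (P : DGPAOn k M)
    {S T : M →ₗ[k] M →ₗ[k] N}
    (h : ∀ i j, ∀ a ∈ P.gr i, ∀ b ∈ P.gr j, S a b = T a b) (a b : M) : S a b = T a b := by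
  refine gr_ind P.decomp (p := fun a => S a b = T a b) (fun i a ha => ?_) (fun x y h1 h2 => ?_) a
  · refine gr_ind P.decomp (p := fun b => S a b = T a b) (fun j b hb => h i j a ha b hb)
      (fun x y h1 h2 => ?_) b
    simp only [map_add, h1, h2]
  · simp only [map_add, LinearMap.add_apply, h1, h2]

theorem left_mul (hR : IsTensorDGPA P Q R) (a b : A) :
    P.mul a b ⊗ₜ[k] Q.one = R.mul (a ⊗ₜ[k] Q.one) (b ⊗ₜ[k] Q.one) := by
  let ι : A →ₗ[k] A ⊗[k] B := (TensorProduct.mk k A B).flip Q.one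
  refine ext_bil P (S := P.mul.compr₂ ι) (T := R.mul.compl₁₂ ι ι) (fun i j a ha b hb => ?_) a b
  change P.mul a b ⊗ₜ[k] Q.one = R.mul (a ⊗ₜ[k] Q.one) (b ⊗ₜ[k] Q.one)
  rw [hR.2.2.1 ha Q.one_mem hb Q.one_mem, Q.one_mul]; simp

theorem right_mul (hR : IsTensorDGPA P Q R) (a b : B) :
    P.one ⊗ₜ[k] Q.mul a b = R.mul (P.one ⊗ₜ[k] a) (P.one ⊗ₜ[k] b) := by
  let ι : B →ₗ[k] A ⊗[k] B := TensorProduct.mk k A B P.one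
  refine ext_bil Q (S := Q.mul.compr₂ ι) (T := R.mul.compl₁₂ ι ι) (fun i j a ha b hb => ?_) a b
  change P.one ⊗ₜ[k] Q.mul a b = R.mul (P.one ⊗ₜ[k] a) (P.one ⊗ₜ[k] b)
  rw [hR.2.2.1 P.one_mem ha P.one_mem hb, P.one_mul]; simp

theorem left_br (hR : IsTensorDGPA P Q R) {i j : ℤ} {a b : A} (ha : a ∈ P.gr i)
    (hb : b ∈ P.gr j) :
    P.br a b ⊗ₜ[k] Q.one = R.br (a ⊗ₜ[k] Q.one) (b ⊗ₜ[k] Q.one) := by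
  rw [hR.2.2.2.2 ha Q.one_mem hb Q.one_mem, Q.one_mul, Q.br_one]; simp

theorem right_br (hR : IsTensorDGPA P Q R) {i j : ℤ} {a b : B} (ha : a ∈ Q.gr i)
    (hb : b ∈ Q.gr j) :
    P.one ⊗ₜ[k] Q.br a b = R.br (P.one ⊗ₜ[k] a) (P.one ⊗ₜ[k] b) := by
  rw [hR.2.2.2.2 P.one_mem ha P.one_mem hb, P.one_mul, P.br_one]; simp

theorem left_d (hR : IsTensorDGPA P Q R) (a : A) :
    P.d a ⊗ₜ[k] Q.one = R.d (a ⊗ₜ[k] Q.one) := by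
  refine gr_ind P.decomp (p := fun a => P.d a ⊗ₜ[k] Q.one = R.d (a ⊗ₜ[k] Q.one))
    (fun i a ha => ?_) (fun x y h1 h2 => ?_) a
  · rw [hR.2.2.2.1 ha Q.one_mem, Q.d_one]; simp
  · rw [map_add, TensorProduct.add_tmul, TensorProduct.add_tmul, map_add, h1, h2]

theorem right_d (hR : IsTensorDGPA P Q R) (a : B) :
    P.one ⊗ₜ[k] Q.d a = R.d (P.one ⊗ₜ[k] a) := by
  refine gr_ind Q.decomp (p := fun a => P.one ⊗ₜ[k] Q.d a = R.d (P.one ⊗ₜ[k] a))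
    (fun i a ha => ?_) (fun x y h1 h2 => ?_) a
  · rw [hR.2.2.2.1 P.one_mem ha, P.d_one]; simp
  · rw [map_add, TensorProduct.tmul_add, TensorProduct.tmul_add, map_add, h1, h2]

theorem pair_left (hR : IsTensorDGPA P Q R) {D : DGAOn k N} {f g : A ⊗[k] B →ₗ[k] N}
    (h : UEPair R D f g) :
    UEPair P D (f ∘ₗ (TensorProduct.mk k A B).flip Q.one)
      (g ∘ₗ (TensorProduct.mk k A B).flip Q.one) := by
  obtain ⟨h1, h2, h3, h4, h5, h6, h7, h8, h9⟩ := h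
  simp only [UEPair, LinearMap.comp_apply, LinearMap.flip_apply, TensorProduct.mk_apply]
  refine ⟨fun hx => h1 (mem_left hR hx), fun hx => h2 (mem_left hR hx), ?_, ?_, ?_, ?_, ?_, ?_, ?_⟩
  · intro a b; rw [left_mul hR, h3]
  · rw [← hR.2.1, h4]
  · intro a; rw [left_d hR, h5]
  · intro a; rw [left_d hR, h6]
  · intro i j a b ha hb; rw [left_br hR ha hb, h7 (mem_left hR ha) (mem_left hR hb)]
  · intro i j a b ha hb; rw [left_br hR ha hb, h8 (mem_left hR ha) (mem_left hR hb)]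
  · intro i j a b ha hb; rw [left_mul hR, h9 (mem_left hR ha) (mem_left hR hb)]

theorem pair_right (hR : IsTensorDGPA P Q R) {D : DGAOn k N} {f g : A ⊗[k] B →ₗ[k] N}
    (h : UEPair R D f g) :
    UEPair Q D (f ∘ₗ TensorProduct.mk k A B P.one) (g ∘ₗ TensorProduct.mk k A B P.one) := by
  obtain ⟨h1, h2, h3, h4, h5, h6, h7, h8, h9⟩ := h
  simp only [UEPair, LinearMap.comp_apply, TensorProduct.mk_apply]
  refine ⟨fun hx => h1 (mem_right hR hx), fun hx => h2 (mem_right hR hx),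
    ?_, ?_, ?_, ?_, ?_, ?_, ?_⟩
  · intro a b; rw [right_mul hR, h3]
  · rw [← hR.2.1, h4]
  · intro a; rw [right_d hR, h5]
  · intro a; rw [right_d hR, h6]
  · intro i j a b ha hb; rw [right_br hR ha hb, h7 (mem_right hR ha) (mem_right hR hb)]
  · intro i j a b ha hb; rw [right_br hR ha hb, h8 (mem_right hR ha) (mem_right hR hb)]
  · intro i j a b ha hb; rw [right_mul hR, h9 (mem_right hR ha) (mem_right hR hb)]

theorem gens_comm (hR : IsTensorDGPA P Q R) {D : DGAOn k N} {f g : A ⊗[k] B →ₗ[k] N}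
    (h : UEPair R D f g) {i j : ℤ} {a : A} {b : B} (ha : a ∈ P.gr i) (hb : b ∈ Q.gr j) :
    GComm D i j (f (a ⊗ₜ[k] Q.one)) (f (P.one ⊗ₜ[k] b)) ∧
    GComm D i j (f (a ⊗ₜ[k] Q.one)) (g (P.one ⊗ₜ[k] b)) ∧
    GComm D i j (g (a ⊗ₜ[k] Q.one)) (f (P.one ⊗ₜ[k] b)) ∧
    GComm D i j (g (a ⊗ₜ[k] Q.one)) (g (P.one ⊗ₜ[k] b)) := by
  obtain ⟨h1, h2, h3, h4, h5, h6, h7, h8, h9⟩ := h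
  have la := mem_left hR ha
  have lb := mem_right hR hb
  refine ⟨?_, GComm.symm ?_, ?_, ?_⟩
  · unfold GComm
    rw [← h3, ← h3, R.mul_comm la lb, map_smul]
  · have := h8 lb la
    rw [br_rl hR ha hb, map_zero] at this
    exact (sub_eq_zero.mp this.symm)
  · have := h8 la lb
    rw [br_lr hR ha hb, map_zero] at this
    exact (sub_eq_zero.mp this.symm)
  · have := h7 la lb
    rw [br_lr hR ha hb, map_zero] at this
    exact (sub_eq_zero.mp this.symm)

theorem tensor_exists (hR : IsTensorDGPA P Q R) (hEP : IsEnvDGA P EP) (hEQ : IsEnvDGA Q EQ)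
    (hG : IsTensorDGA EP EQ G) {D : DGAOn k N} {f g : A ⊗[k] B →ₗ[k] N} (h : UEPair R D f g) :
    ∃ φ : Env P ⊗[k] Env Q →ₗ[k] N, IsDGAHom G D φ ∧
      (∀ a, φ (TensorProduct.map (mgen P) (mgen Q) a) = f a) ∧
      (∀ a, φ ((TensorProduct.map (mgen P) (hgen Q) +
        TensorProduct.map (hgen P) (mgen Q)) a) = g a) := by
  obtain ⟨φ, ⟨hφ, fm, fh⟩, -⟩ := (env_isUEnv hEP).2 N D _ _ (pair_left hR h)
  obtain ⟨ψ, ⟨hψ, gm, gh⟩, -⟩ := (env_isUEnv hEQ).2 N D _ _ (pair_right hR h)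
  simp only [LinearMap.comp_apply, LinearMap.flip_apply, TensorProduct.mk_apply] at fm fh gm gh
  have hcomm : ∀ i j, ∀ x ∈ EP.gr i, ∀ y ∈ EQ.gr j, GComm D i j (φ x) (ψ y) := by
    intro i j x hx y hy
    refine env_gcomm hEQ hψ ?_ ?_ hy
    · intro j b hb
      refine (env_gcomm hEP hφ ?_ ?_ hx).symm
      · intro i a ha; rw [fm, gm]; exact (gens_comm hR h ha hb).1.symm
      · intro i a ha; rw [fh, gm]; exact (gens_comm hR h ha hb).2.2.1.symm
    · intro j b hb
      refine (env_gcomm hEP hφ ?_ ?_ hx).symm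
      · intro i a ha; rw [fm, gh]; exact (gens_comm hR h ha hb).2.1.symm
      · intro i a ha; rw [fh, gh]; exact (gens_comm hR h ha hb).2.2.2.symm
  let Φ : Env P ⊗[k] Env Q →ₗ[k] N := TensorProduct.lift (D.mul.compl₁₂ φ ψ)
  have hΦ : ∀ x y, Φ (x ⊗ₜ[k] y) = D.mul (φ x) (ψ y) := fun x y => by simp [Φ]
  obtain ⟨g1, g2, g3, g4⟩ := hG
  refine ⟨Φ, ⟨?_, ?_, ?_, ?_⟩, ?_, ?_⟩
  · intro n x hx
    refine tensor_gr_ind (p := fun x => Φ x ∈ D.gr n) g1 ?_ ?_ ?_ ?_ hx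
    · rintro i j rfl x hx y hy
      rw [hΦ]; exact D.mul_mem (hφ.1 hx) (hψ.1 hy)
    · simp
    · intro x y h1 h2; rw [map_add]; exact Submodule.add_mem _ h1 h2
    · intro c x h1; rw [map_smul]; exact Submodule.smul_mem _ _ h1
  · intro u v
    refine tensor_ind EP.decomp EQ.decomp (p := fun u => Φ (G.mul u v) = D.mul (Φ u) (Φ v))
      ?_ ?_ u
    · intro i j x hx y hy
      refine tensor_ind EP.decomp EQ.decomp
        (p := fun v => Φ (G.mul (x ⊗ₜ[k] y) v) = D.mul (Φ (x ⊗ₜ[k] y)) (Φ v)) ?_ ?_ v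
      · intro i' j' x' hx' y' hy'
        have hc : D.mul (ψ y) (φ x') = _ := (hcomm i' j x' hx' y hy).symm
        rw [g3 hx hy hx' hy', map_smul, hΦ, hΦ, hΦ, hφ.2.1, hψ.2.1, D.mul_assoc, D.mul_assoc,
          ← D.mul_assoc (ψ y), hc, map_smul, LinearMap.smul_apply, map_smul, D.mul_assoc,
          mul_comm j i']
      · intro x y h1 h2; simp only [map_add, h1, h2]
    · intro x y h1 h2; simp only [map_add, LinearMap.add_apply, h1, h2]
  · rw [g2, hΦ, hφ.2.2.1, hψ.2.2.1, D.one_mul]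
  · refine tensor_ind EP.decomp EQ.decomp ?_ ?_
    · intro i j x hx y hy
      rw [g4 hx hy, map_add, map_smul, hΦ, hΦ, hΦ, D.d_mul (hφ.1 hx) (hψ.1 hy), hφ.2.2.2,
        hψ.2.2.2]
    · intro x y h1 h2; simp only [map_add, h1, h2]
  · refine tensor_ind P.decomp Q.decomp ?_ ?_
    · intro i j a ha b hb
      rw [TensorProduct.map_tmul, hΦ, fm, gm, ← h.2.2.1, mul_lr hR ha hb]
    · intro x y h1 h2; simp only [map_add, h1, h2]
  · refine tensor_ind P.decomp Q.decomp ?_ ?_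
    · intro i j a ha b hb
      rw [LinearMap.add_apply, map_add, TensorProduct.map_tmul, TensorProduct.map_tmul, hΦ, hΦ,
        fm, gm, fh, gh]
      have h9 := h.2.2.2.2.2.2.2.2 (mem_left hR ha) (mem_right hR hb)
      rw [mul_lr hR ha hb] at h9
      rw [h9, show D.mul (g (a ⊗ₜ[k] Q.one)) (f (P.one ⊗ₜ[k] b)) = _ from
        (gens_comm hR h ha hb).2.2.1]
    · intro x y h1 h2; simp only [map_add, h1, h2]

theorem tensor_unique (hEP : IsEnvDGA P EP) (hEQ : IsEnvDGA Q EQ)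
    (hG : IsTensorDGA EP EQ G) {D : DGAOn k N} {φ ψ : Env P ⊗[k] Env Q →ₗ[k] N}
    (hφ : IsDGAHom G D φ) (hψ : IsDGAHom G D ψ)
    (hm : ∀ a, φ (TensorProduct.map (mgen P) (mgen Q) a) =
      ψ (TensorProduct.map (mgen P) (mgen Q) a))
    (hh : ∀ a, φ ((TensorProduct.map (mgen P) (hgen Q) + TensorProduct.map (hgen P) (mgen Q)) a) =
      ψ ((TensorProduct.map (mgen P) (hgen Q) + TensorProduct.map (hgen P) (mgen Q)) a)) :
    φ = ψ := by
  obtain ⟨g1, g2, g3, g4⟩ := hG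
  have o1 : (1 : Env P) ∈ EP.gr 0 := hEP.2.1 ▸ EP.one_mem
  have o2 : (1 : Env Q) ∈ EQ.gr 0 := hEQ.2.1 ▸ EQ.one_mem
  have hone : φ ((1 : Env P) ⊗ₜ[k] (1 : Env Q)) = ψ ((1 : Env P) ⊗ₜ[k] (1 : Env Q)) := by
    rw [← hEP.2.1, ← hEQ.2.1, ← g2, hφ.2.2.1, hψ.2.2.1]
  have hl : ∀ i, ∀ x ∈ EP.gr i,
      φ (x ⊗ₜ[k] (1 : Env Q)) = ψ (x ⊗ₜ[k] (1 : Env Q)) := by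
    intro i x hx
    refine env_hom_ind hEP (p := fun i x =>
      φ (x ⊗ₜ[k] (1 : Env Q)) = ψ (x ⊗ₜ[k] (1 : Env Q))) hone ?_ ?_ ?_ ?_ ?_ ?_ hx
    · intro i a ha
      have := hm (a ⊗ₜ[k] Q.one)
      rwa [TensorProduct.map_tmul, mgen_one] at this
    · intro i a ha
      have := hh (a ⊗ₜ[k] Q.one)
      rwa [LinearMap.add_apply, TensorProduct.map_tmul, TensorProduct.map_tmul, mgen_one,
        hgen_one, TensorProduct.tmul_zero, zero_add] at this
    · intro i; rw [TensorProduct.zero_tmul, map_zero, map_zero]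
    · intro i x y h1 h2; rw [TensorProduct.add_tmul, map_add, map_add, h1, h2]
    · intro i c x h1; rw [← TensorProduct.smul_tmul', map_smul, map_smul, h1]
    · intro i j x y hx hy h1 h2
      have := g3 hx o2 hy o2
      rw [mul_zero, zpow_zero, one_smul, hEP.1, hEQ.1, mul_one] at this
      rw [← this, hφ.2.1, hψ.2.1, h1, h2]
  have hr : ∀ i, ∀ y ∈ EQ.gr i,
      φ ((1 : Env P) ⊗ₜ[k] y) = ψ ((1 : Env P) ⊗ₜ[k] y) := by
    intro i y hy
    refine env_hom_ind hEQ (p := fun i y =>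
      φ ((1 : Env P) ⊗ₜ[k] y) = ψ ((1 : Env P) ⊗ₜ[k] y)) hone ?_ ?_ ?_ ?_ ?_ ?_ hy
    · intro i a ha
      have := hm (P.one ⊗ₜ[k] a)
      rwa [TensorProduct.map_tmul, mgen_one] at this
    · intro i a ha
      have := hh (P.one ⊗ₜ[k] a)
      rwa [LinearMap.add_apply, TensorProduct.map_tmul, TensorProduct.map_tmul, mgen_one,
        hgen_one, TensorProduct.zero_tmul, add_zero] at this
    · intro i; rw [TensorProduct.tmul_zero, map_zero, map_zero]
    · intro i x y h1 h2; rw [TensorProduct.tmul_add, map_add, map_add, h1, h2]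
    · intro i c x h1; rw [TensorProduct.tmul_smul, map_smul, map_smul, h1]
    · intro i j x y hx hy h1 h2
      have := g3 o1 hx o1 hy
      rw [zero_mul, zpow_zero, one_smul, hEP.1, hEQ.1, mul_one] at this
      rw [← this, hφ.2.1, hψ.2.1, h1, h2]
  apply LinearMap.ext
  refine tensor_ind EP.decomp EQ.decomp ?_ ?_
  · intro i j x hx y hy
    have := g3 hx o2 o1 hy
    rw [mul_zero, zpow_zero, one_smul, hEP.1, hEQ.1, mul_one, one_mul] at this
    rw [← this, hφ.2.1, hψ.2.1, hl i x hx, hr j y hy]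
  · intro x y h1 h2; rw [map_add, map_add, h1, h2]

theorem tensor_isUEnv (hR : IsTensorDGPA P Q R) (hEP : IsEnvDGA P EP) (hEQ : IsEnvDGA Q EQ)
    (hG : IsTensorDGA EP EQ G) :
    IsUEnv R G (TensorProduct.map (mgen P) (mgen Q))
      (TensorProduct.map (mgen P) (hgen Q) + TensorProduct.map (hgen P) (mgen Q)) := by
  refine ⟨tensor_pair hR hEP hEQ hG, ?_⟩
  intro D' _ _ D f g h
  obtain ⟨φ, h1, h2, h3⟩ := tensor_exists hR hEP hEQ hG h
  refine ⟨φ, ⟨h1, h2, h3⟩, ?_⟩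
  rintro ψ ⟨p1, p2, p3⟩
  exact tensor_unique hEP hEQ hG p1 h1 (fun a => by rw [p2, h2]) (fun a => by rw [p3, h3])

theorem IsDGAHom.id {M : Type u} [AddCommGroup M] [Module k M] (E : DGAOn k M) :
    IsDGAHom E E LinearMap.id :=
  ⟨fun hx => hx, fun _ _ => rfl, rfl, fun _ => rfl⟩

theorem IsDGAHom.comp {M M' : Type u} [AddCommGroup M] [Module k M] [AddCommGroup M']
    [Module k M'] {E : DGAOn k M} {F : DGAOn k M'} {D : DGAOn k N} {φ : M →ₗ[k] M'}
    {ψ : M' →ₗ[k] N} (hψ : IsDGAHom F D ψ) (hφ : IsDGAHom E F φ) : IsDGAHom E D (ψ ∘ₗ φ) := by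
  refine ⟨fun hx => hψ.1 (hφ.1 hx), fun x y => ?_, ?_, fun x => ?_⟩
  · simp only [LinearMap.comp_apply, hφ.2.1, hψ.2.1]
  · simp only [LinearMap.comp_apply, hφ.2.2.1, hψ.2.2.1]
  · simp only [LinearMap.comp_apply, hφ.2.2.2, hψ.2.2.2]

theorem isUEnv_iso {M N' : Type u} [AddCommGroup M] [Module k M] [AddCommGroup N'] [Module k N']
    {P : DGPAOn k M} {E : DGAOn k N} {F : DGAOn k N'} {α β : M →ₗ[k] N} {α' β' : M →ₗ[k] N'}
    (h : IsUEnv P E α β) (h' : IsUEnv P F α' β') :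
    ∃ φ : N →ₗ[k] N', IsDGAHom E F φ ∧ Function.Bijective φ ∧
      (∀ x, φ (α x) = α' x) ∧ (∀ x, φ (β x) = β' x) := by
  obtain ⟨φ, ⟨a1, a2, a3⟩, -⟩ := h.2 N' F _ _ h'.1
  obtain ⟨ψ, ⟨b1, b2, b3⟩, -⟩ := h'.2 N E _ _ h.1
  have e1 : ψ ∘ₗ φ = LinearMap.id := (h.2 N E _ _ h.1).unique
    ⟨b1.comp a1, fun a => by simp [a2, b2], fun a => by simp [a3, b3]⟩
    ⟨IsDGAHom.id E, fun _ => rfl, fun _ => rfl⟩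
  have e2 : φ ∘ₗ ψ = LinearMap.id := (h'.2 N' F _ _ h'.1).unique
    ⟨a1.comp b1, fun a => by simp [a2, b2], fun a => by simp [a3, b3]⟩
    ⟨IsDGAHom.id F, fun _ => rfl, fun _ => rfl⟩
  exact ⟨φ, a1, Function.bijective_iff_has_inverse.mpr
    ⟨ψ, fun x => LinearMap.congr_fun e1 x, fun x => LinearMap.congr_fun e2 x⟩, a2, a3⟩

end Universal

/-- `(A⊗B)^e ≅ A^e ⊗ B^e` as differential graded algebras; the maps
`m = m^A ⊗ m^B` and `h = m^A ⊗ h^B + h^A ⊗ m^B` exhibit `A^e ⊗ B^e` as a universal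
enveloping algebra of the tensor product differential graded Poisson algebra `A ⊗ B`. -/
theorem stmt_18 (k : Type u) [Field k] (A B : Type u)
    [AddCommGroup A] [Module k A] [AddCommGroup B] [Module k B]
    (P : DGPAOn k A) (Q : DGPAOn k B)
    (R : DGPAOn k (A ⊗[k] B)) (hR : IsTensorDGPA P Q R)
    (ER : DGAOn k (Env R)) (hER : IsEnvDGA R ER)
    (EP : DGAOn k (Env P)) (hEP : IsEnvDGA P EP)
    (EQ : DGAOn k (Env Q)) (hEQ : IsEnvDGA Q EQ)
    (G : DGAOn k (Env P ⊗[k] Env Q)) (hG : IsTensorDGA EP EQ G) :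
    IsUEnv R G (TensorProduct.map (mgen P) (mgen Q))
      (TensorProduct.map (mgen P) (hgen Q) + TensorProduct.map (hgen P) (mgen Q)) ∧
    ∃ φ : Env R →ₗ[k] Env P ⊗[k] Env Q,
      IsDGAHom ER G φ ∧ Function.Bijective φ ∧
      (∀ x : A ⊗[k] B, φ (mgen R x) = TensorProduct.map (mgen P) (mgen Q) x) ∧
      (∀ x : A ⊗[k] B, φ (hgen R x) =
        (TensorProduct.map (mgen P) (hgen Q) + TensorProduct.map (hgen P) (mgen Q)) x) := by
  have h := tensor_isUEnv hR hEP hEQ hG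
  exact ⟨h, isUEnv_iso (env_isUEnv hER) h⟩

end DGPaper

end
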